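/- arXiv:0909.4865 — 7 statements merged into one kernel-verified Lean document; each statement's English description precedes it below -/
import Mathlib

section
/- Every nonzero real binary form of degree d has real rank at most d; that is, for every nonzero homogeneous polynomial f ∈ ℝ[x,y] of degree d ≥ 1 there exist real linear forms ℓ₁,…,ℓ_d and real numbers c₁,…,c_d such that f = ∑_{j=1}^d c_j ℓ_j^d. -/
open MvPolynomial

noncomputable section

/-- The real linear binary form `a·x + b·y`. -/
def lin (a b : ℝ) : MvPolynomial (Fin 2) ℝ := C a * X 0 + C b * X 1

/-- `f` is a sum of `r` terms `cⱼ · ℓⱼ^d` with `ℓⱼ` nonzero real linear forms. -/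
def HasDecomp (f : MvPolynomial (Fin 2) ℝ) (d r : ℕ) : Prop :=
  ∃ c a b : Fin r → ℝ, (∀ j, (a j, b j) ≠ (0, 0)) ∧
    f = ∑ j, C (c j) * lin (a j) (b j) ^ d

/-- The real (symmetric) rank of a binary form of degree `d`:
the least number of `d`-th powers of real linear forms needed to write `f`. -/
def realRank (f : MvPolynomial (Fin 2) ℝ) (d : ℕ) : ℕ :=
  sInf {r | HasDecomp f d r}

/-- The set of real projective roots of a binary form. -/
def projRoots (f : MvPolynomial (Fin 2) ℝ) : Set (Projectivization ℝ (Fin 2 → ℝ)) :=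
  {p | eval p.rep f = 0}

/-- `f` is a product of `d` pairwise non-proportional real linear forms,
i.e. `f` has `d` distinct real roots. -/
def SplitsDistinct (f : MvPolynomial (Fin 2) ℝ) (d : ℕ) : Prop :=
  ∃ a b : Fin d → ℝ, (∀ j, (a j, b j) ≠ (0, 0)) ∧
    (∀ i j, i ≠ j → a i * b j ≠ a j * b i) ∧
    f = ∏ j, lin (a j) (b j)

/-- `f` has distinct roots, i.e. it is squarefree as a complex polynomial. -/
def SquarefreeC (f : MvPolynomial (Fin 2) ℝ) : Prop :=
  Squarefree (MvPolynomial.map (algebraMap ℝ ℂ) f)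

/-- The linear change of variables of `f` by the matrix `A`: `f(A(x,y))`. -/
def subst (A : Matrix (Fin 2) (Fin 2) ℝ) (f : MvPolynomial (Fin 2) ℝ) :
    MvPolynomial (Fin 2) ℝ :=
  aeval (fun i => C (A i 0) * X 0 + C (A i 1) * X 1) f

/-- The complex rank of a real binary form of degree `d`. -/
def complexRank (f : MvPolynomial (Fin 2) ℝ) (d : ℕ) : ℕ :=
  sInf {r | ∃ a b : Fin r → ℂ, (∀ j, (a j, b j) ≠ (0, 0)) ∧
    MvPolynomial.map (algebraMap ℝ ℂ) f = ∑ j, (C (a j) * X 0 + C (b j) * X 1) ^ d}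

def genL (n : ℕ) (α : ℕ → ℝ) : Polynomial ℝ →ₗ[ℝ] ℝ :=
  ∑ k ∈ Finset.range n, α k • Polynomial.lcoeff ℝ k

lemma genL_apply (n : ℕ) (α : ℕ → ℝ) (p : Polynomial ℝ) :
    genL n α p = ∑ k ∈ Finset.range n, α k * p.coeff k := by
  simp [genL, LinearMap.sum_apply]

lemma genL_X_pow (n : ℕ) (α : ℕ → ℝ) (k : ℕ) (hk : k < n) :
    genL n α (Polynomial.X ^ k) = α k := by
  rw [genL_apply, Finset.sum_eq_single k]
  · simp
  · intro b _ hb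
    simp [Polynomial.coeff_X_pow, hb]
  · simp [hk]

lemma cont_coeff {n : ℕ} (t : ℝ → Fin n → ℝ) (ht : ∀ i, Continuous fun u => t u i)
    (s : Finset (Fin n)) : ∀ k, Continuous fun u =>
      (∏ i ∈ s, (Polynomial.X - Polynomial.C (t u i))).coeff k := by
  induction s using Finset.induction_on with
  | empty => intro k; simp only [Finset.prod_empty]; exact continuous_const
  | insert a s ha ih =>
    intro k
    simp only [Finset.prod_insert ha, Polynomial.coeff_mul]
    refine continuous_finsetSum _ fun x _ => Continuous.mul ?_ (ih _)
    simp only [Polynomial.coeff_sub, Polynomial.coeff_C]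
    by_cases h : x.1 = 0
    · simp only [h, if_true]; exact continuous_const.sub (ht a)
    · simpa [h] using continuous_const

/-- degree `< m`, interpolation at `m` nodes. -/
lemma interp (L : Polynomial ℝ →ₗ[ℝ] ℝ) (S : Finset ℝ) (p : Polynomial ℝ)
    (hp : p.degree < S.card) :
    L p = ∑ v ∈ S, L (Lagrange.basis S id v) * p.eval v := by
  have h := Lagrange.eq_interpolate (s := S) (v := id) (Set.injOn_id _) hp
  conv_lhs => rw [h]
  rw [Lagrange.interpolate_apply, map_sum]
  refine Finset.sum_congr rfl fun v _ => ?_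
  rw [← Polynomial.smul_eq_C_mul, map_smul, smul_eq_mul, mul_comm]
  rfl

lemma exists_low (L : Polynomial ℝ →ₗ[ℝ] ℝ) (n : ℕ) (p : Polynomial ℝ)
    (hp : p.degree < ((n + 1 : ℕ) : WithBot ℕ)) (hL : L p ≠ 0) :
    ∃ s : Fin n → ℝ, StrictMono s ∧ L (∏ i, (Polynomial.X - Polynomial.C (s i))) ≠ 0 := by
  obtain ⟨S, hS⟩ := Infinite.exists_subset_card_eq ℝ (n + 1)
  by_contra! hcon
  apply hL
  rw [interp L S p (by rw [hS]; exact hp)]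
  refine Finset.sum_eq_zero fun v hv => ?_
  have hc : (S.erase v).card = n := by rw [Finset.card_erase_of_mem hv, hS]; rfl
  have h1 := hcon ((S.erase v).orderEmbOfFin hc) (OrderEmbedding.strictMono _)
  have h2 : ∏ i, (Polynomial.X - Polynomial.C ((S.erase v).orderEmbOfFin hc i))
      = ∏ x ∈ S.erase v, (Polynomial.X - Polynomial.C x) := by
    conv_rhs => rw [← Finset.image_orderEmbOfFin_univ (S.erase v) hc]
    rw [Finset.prod_image]
    intro a _ b _ hab
    exact ((S.erase v).orderEmbOfFin hc).injective hab
  rw [h2] at h1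
  have h3 : Lagrange.basis S id v = (∏ x ∈ S.erase v, (v - x)⁻¹) •
      ∏ x ∈ S.erase v, (Polynomial.X - Polynomial.C x) := by
    rw [Lagrange.basis, Polynomial.smul_eq_C_mul, map_prod, ← Finset.prod_mul_distrib]
    rfl
  rw [h3, map_smul, h1]
  simp

lemma exists_nodes (n : ℕ) (α : ℕ → ℝ) (s : Fin n → ℝ) (hs : StrictMono s)
    (hL : genL (n + 2) α (∏ i, (Polynomial.X - Polynomial.C (s i))) ≠ 0) :
    ∃ t : Fin (n + 1) → ℝ, StrictMono t ∧
      genL (n + 2) α (∏ i, (Polynomial.X - Polynomial.C (t i))) = 0 := by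
  set L := genL (n + 2) α with hLdef
  set N := ∏ i, (Polynomial.X - Polynomial.C (s i)) with hN
  set A := L (Polynomial.X * N)
  set B := L N
  obtain ⟨M, hM⟩ : ∃ M : ℝ, ∀ i, |s i| ≤ M := by
    refine ⟨∑ i, |s i|, fun i => ?_⟩
    exact Finset.single_le_sum (f := fun i => |s i|) (fun _ _ => abs_nonneg _) (Finset.mem_univ i)
  set T := max (M + 1) |A / B| with hT
  have hsT : ∀ i, s i < T := fun i => by
    have := hM i; have := le_abs_self (s i); have := le_max_left (M+1) |A/B|; linarith
  have hsT' : ∀ i, -T < s i := fun i => by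
    have := hM i; have := neg_abs_le (s i); have := le_max_left (M+1) |A/B|; linarith
  have hA : |A| ≤ T * |B| := by
    have := le_max_right (M+1) |A/B|
    rw [abs_div, div_le_iff₀ (abs_pos.mpr hL)] at this
    rwa [← abs_div] at this
  set t0 : Fin (n+1) → ℝ := Fin.snoc (α := fun _ => ℝ) s T with ht0
  set t1 : Fin (n+1) → ℝ := Fin.cons (α := fun _ => ℝ) (-T) s with ht1
  have h0 : StrictMono t0 := by
    intro i j hij
    induction j using Fin.lastCases with
    | last =>
      induction i using Fin.lastCases with
      | last => exact absurd hij (lt_irrefl _)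
      | cast i => simpa [t0] using hsT i
    | cast j =>
      induction i using Fin.lastCases with
      | last => exact absurd hij (not_lt.mpr (Fin.le_last _))
      | cast i => simpa [t0] using hs (by simpa using hij)
  have h1 : StrictMono t1 := by
    intro i j hij
    induction j using Fin.cases with
    | zero => exact absurd hij (not_lt.mpr (Fin.zero_le _))
    | succ j =>
      induction i using Fin.cases with
      | zero => simpa [t1] using hsT' j
      | succ i => simpa [t1] using hs (by simpa using hij)
  set t : ℝ → Fin (n+1) → ℝ := fun u i => (1 - u) * t0 i + u * t1 i with ht
  set F : ℝ → ℝ := fun u => L (∏ i, (Polynomial.X - Polynomial.C (t u i))) with hF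
  have hFc : Continuous F := by
    simp only [hF, hLdef, genL_apply]
    refine continuous_finsetSum _ fun k _ => continuous_const.mul ?_
    exact cont_coeff t (fun i => by simp only [ht]; fun_prop) _ k
  have hF0 : F 0 = A - T * B := by
    have : ∏ i, (Polynomial.X - Polynomial.C (t 0 i)) = Polynomial.X * N - T • N := by
      rw [Fin.prod_univ_castSucc]
      simp [t, t0, hN, Polynomial.smul_eq_C_mul]
      ring
    simp only [hF, this, map_sub, map_smul, smul_eq_mul]; rfl
  have hF1 : F 1 = A + T * B := by
    have : ∏ i, (Polynomial.X - Polynomial.C (t 1 i)) = Polynomial.X * N + T • N := by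
      rw [Fin.prod_univ_succ]
      simp [t, t1, hN, Polynomial.smul_eq_C_mul]
      ring
    simp only [hF, this, map_add, map_smul, smul_eq_mul]; rfl
  have hz : (0:ℝ) ∈ F '' Set.Icc 0 1 := by
    have h01 : (0:ℝ) ≤ 1 := zero_le_one
    obtain ⟨ha1, ha2⟩ := abs_le.mp hA
    rcases le_total 0 B with hB | hB
    · rw [abs_of_nonneg hB] at ha1 ha2
      exact intermediate_value_Icc h01 hFc.continuousOn ⟨by linarith, by linarith⟩
    · rw [abs_of_nonpos hB] at ha1 ha2
      exact intermediate_value_Icc' h01 hFc.continuousOn ⟨by linarith, by linarith⟩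
  obtain ⟨u, ⟨hu0, hu1⟩, hu⟩ := hz
  refine ⟨t u, ?_, hu⟩
  intro i j hij
  have e0 := h0 hij
  have e1 := h1 hij
  simp only [ht]
  rcases eq_or_lt_of_le hu0 with h | h
  · subst h; linarith
  · nlinarith

lemma exists_weights (d : ℕ) (α : ℕ → ℝ) (t : Fin d → ℝ) (ht : StrictMono t)
    (h : genL (d + 1) α (∏ i, (Polynomial.X - Polynomial.C (t i))) = 0) :
    ∃ c : Fin d → ℝ, ∀ k ≤ d, α k = ∑ j, c j * t j ^ k := by
  set L := genL (d + 1) α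
  set N := ∏ i, (Polynomial.X - Polynomial.C (t i)) with hN
  have hNm : N.Monic := Polynomial.monic_prod_of_monic _ _ fun i _ => Polynomial.monic_X_sub_C _
  have hNd : N.degree = d := by
    rw [hN, Polynomial.degree_prod]; simp
  have hNe : ∀ j, N.eval (t j) = 0 := fun j => by
    rw [hN, Polynomial.eval_prod]
    exact Finset.prod_eq_zero (Finset.mem_univ j) (by simp)
  set S := Finset.univ.image t with hS
  have hSc : S.card = d := by rw [hS, Finset.card_image_of_injective _ ht.injective]; simp
  have low : ∀ p : Polynomial ℝ, p.degree < d →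
      L p = ∑ j, L (Lagrange.basis S id (t j)) * p.eval (t j) := by
    intro p hp
    rw [interp L S p (by rwa [hSc]), hS, Finset.sum_image]
    intro a _ b _ hab
    exact ht.injective hab
  refine ⟨fun j => L (Lagrange.basis S id (t j)), fun k hk => ?_⟩
  rw [← genL_X_pow (d + 1) α k (by omega)]
  rcases hk.lt_or_eq with hk | hk
  · have := low (Polynomial.X ^ k) (by rw [Polynomial.degree_X_pow]; exact_mod_cast hk)
    simpa using this
  · subst hk
    have hd : (Polynomial.X ^ k - N).degree < (k : WithBot ℕ) := by
      have := Polynomial.degree_sub_lt_left (p := Polynomial.X ^ k) (q := N)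
        (by rw [hNd, Polynomial.degree_X_pow]) (by simp) (by simp [hNm.leadingCoeff])
      rwa [Polynomial.degree_X_pow] at this
    have := low _ hd
    rw [map_sub, h, sub_zero] at this
    rw [this]
    simp [hNe]

lemma form_eq (d : ℕ) (f : MvPolynomial (Fin 2) ℝ) (hf : f.IsHomogeneous d) :
    f = ∑ k ∈ Finset.range (d + 1),
      C (coeff (Finsupp.single 0 k + Finsupp.single 1 (d - k)) f) * (X 0 ^ k * X 1 ^ (d - k)) := by
  have hm : ∀ (k : ℕ) (r : ℝ), C r * (X 0 ^ k * X 1 ^ (d - k)) =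
      monomial (R := ℝ) (Finsupp.single (0 : Fin 2) k + Finsupp.single 1 (d - k)) r := by
    intro k r
    rw [X_pow_eq_monomial, X_pow_eq_monomial, monomial_mul, C_mul_monomial]
    simp
  simp only [hm]
  ext m
  rw [coeff_sum]
  simp only [coeff_monomial]
  by_cases hmd : m 0 + m 1 = d
  · have hmm : Finsupp.single (0 : Fin 2) (m 0) + Finsupp.single 1 (d - m 0) = m := by
      ext i
      fin_cases i
      · simp
      · simp; omega
    rw [Finset.sum_eq_single (m 0)]
    · rw [if_pos hmm, hmm]
    · intro b _ hb
      rw [if_neg]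
      intro h
      apply hb
      rw [← h]; simp
    · intro h; simp at h; omega
  · rw [Finset.sum_eq_zero]
    · refine hf.coeff_eq_zero ?_
      intro h
      apply hmd
      rw [Finsupp.degree_eq_sum] at h
      simpa using h
    · intro k hk
      rw [if_neg]
      intro h
      apply hmd
      rw [← h]
      simp at hk ⊢
      omega

/-- every nonzero real binary form of degree `d ≥ 1` is a sum of `d`
terms `cⱼ ℓⱼ^d` with real linear forms `ℓⱼ`, i.e. its real rank is at most `d`. -/
theorem stmt0 (d : ℕ) (hd : 1 ≤ d) (f : MvPolynomial (Fin 2) ℝ) (hf0 : f ≠ 0)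
    (hf : f.IsHomogeneous d) :
    ∃ c a b : Fin d → ℝ, (∀ j, (a j, b j) ≠ (0, 0)) ∧
      f = ∑ j, C (c j) * lin (a j) (b j) ^ d := by
  obtain ⟨n, rfl⟩ : ∃ n, d = n + 1 := ⟨d - 1, by omega⟩
  set d := n + 1 with hdn
  set β : ℕ → ℝ := fun k => coeff (Finsupp.single 0 k + Finsupp.single 1 (d - k)) f with hβ
  have hfe : f = ∑ k ∈ Finset.range (d + 1), C (β k) * (X 0 ^ k * X 1 ^ (d - k)) :=
    form_eq d f hf
  set α : ℕ → ℝ := fun k => β k / (d.choose k) with hα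
  by_cases hcase : ∀ k < d, α k = 0
  · have hb : ∀ k < d, β k = 0 := by
      intro k hk
      have h1 := hcase k hk
      have h2 : (d.choose k : ℝ) ≠ 0 := by
        exact_mod_cast (Nat.choose_pos hk.le).ne'
      simpa [hα, h2] using h1
    refine ⟨fun j => if j = 0 then β d else 0, fun _ => 1, fun _ => 0, by simp, ?_⟩
    rw [Finset.sum_eq_single 0 (by intro b _ hb; simp [hb]) (by simp)]
    conv_lhs => rw [hfe]
    rw [Finset.sum_range_succ, Finset.sum_eq_zero]
    · simp [lin]
    · intro k hk
      rw [hb k (Finset.mem_range.mp hk)]; simp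
  · push Not at hcase
    obtain ⟨k, hk, hαk⟩ := hcase
    obtain ⟨s, hs, hsL⟩ := exists_low (genL (n + 2) α) n (Polynomial.X ^ k)
      (by rw [Polynomial.degree_X_pow]; exact_mod_cast hk)
      (by rw [genL_X_pow _ _ _ (by omega)]; exact hαk)
    obtain ⟨t, ht, htL⟩ := exists_nodes n α s hs hsL
    obtain ⟨c, hc⟩ := exists_weights (n + 1) α t ht htL
    refine ⟨c, t, fun _ => 1, by simp, ?_⟩
    conv_lhs => rw [hfe]
    simp only [lin, add_pow, Finset.mul_sum]
    rw [Finset.sum_comm]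
    refine Finset.sum_congr rfl fun k hk => ?_
    have hk' : k ≤ d := by simpa [Nat.lt_succ_iff] using hk
    have h2 : (d.choose k : ℝ) ≠ 0 := by
      exact_mod_cast (Nat.choose_pos hk').ne'
    have hbk : β k = ∑ j, c j * t j ^ k * d.choose k := by
      rw [← Finset.sum_mul, ← hc k hk']
      simp only [hα]; field_simp
    rw [hbk, map_sum, Finset.sum_mul]
    refine Finset.sum_congr rfl fun j _ => ?_
    simp only [map_mul, map_pow, map_natCast, map_one, one_mul, mul_pow]
    ring
end
end

section
/- Let f be a real binary cubic form with distinct roots (squarefree over ℂ). Then the following are equivalent: (1) the real rank of f is 2; (2) Δ(f) < 0; (3) f has exactly one real root. -/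
open MvPolynomial

noncomputable section

lemma monic_root (b c d : ℝ) : ∃ t : ℝ, t ^ 3 + b * t ^ 2 + c * t + d = 0 := by
  set M : ℝ := 1 + |b| + |c| + |d| with hM
  have hb := abs_nonneg b
  have hc := abs_nonneg c
  have hd := abs_nonneg d
  have hM1 : 1 ≤ M := by linarith
  have h2 : M ≤ M ^ 2 := by nlinarith
  have h1 : (1:ℝ) ≤ M ^ 2 := by linarith
  have h3 : M ^ 3 = M ^ 2 + |b| * M ^ 2 + |c| * M ^ 2 + |d| * M ^ 2 := by
    have : M ^ 3 = M * M ^ 2 := by ring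
    rw [this]; nth_rewrite 1 [hM]; ring
  have e2 : |c| * M ≤ |c| * M ^ 2 := mul_le_mul_of_nonneg_left h2 hc
  have e3 : |d| ≤ |d| * M ^ 2 := le_mul_of_one_le_right hd h1
  have f1 : b * M ^ 2 ≤ |b| * M ^ 2 := mul_le_mul_of_nonneg_right (le_abs_self b) (by positivity)
  have f1' : -(|b| * M ^ 2) ≤ b * M ^ 2 := by nlinarith [neg_abs_le b]
  have f2 : c * M ≤ |c| * M := mul_le_mul_of_nonneg_right (le_abs_self c) (by linarith)
  have f2' : -(|c| * M) ≤ c * M := by nlinarith [neg_abs_le c]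
  have f3 := le_abs_self d
  have f3' := neg_abs_le d
  have hcont : ContinuousOn (fun t : ℝ => t ^ 3 + b * t ^ 2 + c * t + d) (Set.Icc (-M) M) := by
    fun_prop
  have hmem := intermediate_value_Icc (by linarith : -M ≤ M) hcont
  have h0 : (0:ℝ) ∈ Set.Icc ((-M) ^ 3 + b * (-M) ^ 2 + c * (-M) + d)
      (M ^ 3 + b * M ^ 2 + c * M + d) := by
    constructor
    · have : (-M) ^ 3 + b * (-M) ^ 2 + c * (-M) + d = -M ^ 3 + b * M ^ 2 - c * M + d := by ring
      rw [this]; linarith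
    · linarith
  obtain ⟨t, -, ht⟩ := hmem h0
  exact ⟨t, ht⟩

lemma exists_factor (a₀ a₁ a₂ a₃ : ℝ) : ∃ u v A B E : ℝ, (u ≠ 0 ∨ v ≠ 0) ∧
    a₀ = u * A ∧ 3 * a₁ = u * B + v * A ∧ 3 * a₂ = u * E + v * B ∧ a₃ = v * E := by
  by_cases h : a₀ = 0
  · exact ⟨0, 1, 3 * a₁, 3 * a₂, a₃, by simp, by simp [h], by ring, by ring, by ring⟩
  · obtain ⟨t, ht⟩ := monic_root (3 * a₁ / a₀) (3 * a₂ / a₀) (a₃ / a₀)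
    refine ⟨1, -t, a₀, 3 * a₁ + a₀ * t, 3 * a₂ + (3 * a₁ + a₀ * t) * t, by simp, by ring, by ring,
      by ring, ?_⟩
    field_simp at ht
    linear_combination ht

lemma not_sqfree (f g : MvPolynomial (Fin 2) ℝ) (a b : ℝ) (h : f = lin a b * lin a b * g) :
    ¬ SquarefreeC f := by
  intro hs
  have hu : IsUnit (MvPolynomial.map (algebraMap ℝ ℂ) (lin a b)) := by
    apply hs
    rw [h, map_mul, map_mul]
    exact Dvd.intro _ rfl
  have := hu.map (eval (0 : Fin 2 → ℂ))
  simp [lin] at this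

/-- The binary cubic with the given coefficients. -/
def cub (a₀ a₁ a₂ a₃ : ℝ) : MvPolynomial (Fin 2) ℝ :=
  C a₀ * X 0 ^ 3 + C (3 * a₁) * X 0 ^ 2 * X 1 + C (3 * a₂) * X 0 * X 1 ^ 2 + C a₃ * X 1 ^ 3

lemma eval_cub (a₀ a₁ a₂ a₃ : ℝ) (w : Fin 2 → ℝ) : eval w (cub a₀ a₁ a₂ a₃) =
    a₀ * w 0 ^ 3 + 3 * a₁ * w 0 ^ 2 * w 1 + 3 * a₂ * w 0 * w 1 ^ 2 + a₃ * w 1 ^ 3 := by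
  simp [cub]

lemma cub_eq {a₀ a₁ a₂ a₃ : ℝ} {g : MvPolynomial (Fin 2) ℝ}
    (h : ∀ w : Fin 2 → ℝ, a₀ * w 0 ^ 3 + 3 * a₁ * w 0 ^ 2 * w 1 + 3 * a₂ * w 0 * w 1 ^ 2
      + a₃ * w 1 ^ 3 = eval w g) : cub a₀ a₁ a₂ a₃ = g := by
  apply MvPolynomial.funext
  intro w
  rw [eval_cub, h]

lemma factor_nondeg {a₀ a₁ a₂ a₃ u v A B E : ℝ} (huv : u ≠ 0 ∨ v ≠ 0)
    (h0 : a₀ = u * A) (h1 : 3 * a₁ = u * B + v * A) (h2 : 3 * a₂ = u * E + v * B) (h3 : a₃ = v * E)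
    (hs : SquarefreeC (cub a₀ a₁ a₂ a₃)) :
    B ^ 2 - 4 * A * E ≠ 0 ∧ A * v ^ 2 - B * u * v + E * u ^ 2 ≠ 0 := by
  constructor
  · intro hd
    by_cases hA : A = 0
    · have hB : B = 0 := by subst hA; simpa using hd
      refine not_sqfree _ (C E * lin u v) 0 1 (cub_eq fun w => ?_) hs
      rw [h0, h1, h2, h3]; subst hA hB; simp [lin]; ring
    · refine not_sqfree _ (C (1 / (4 * A)) * lin u v) (2 * A) B (cub_eq fun w => ?_) hs
      rw [h0, h1, h2, h3]; simp [lin]; field_simp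
      linear_combination (-(w 1) ^ 2 * (u * w 0 + v * w 1)) * hd
  · intro hr
    rcases huv with hu | hv
    · refine not_sqfree _ (lin (A / u) ((B - v * A / u) / u)) u v (cub_eq fun w => ?_) hs
      rw [h0, h1, h2, h3]; simp [lin]; field_simp
      linear_combination ((w 1) ^ 2 * (u * w 0 + v * w 1)) * hr
    · refine not_sqfree _ (lin ((B - u * E / v) / v) (E / v)) u v (cub_eq fun w => ?_) hs
      rw [h0, h1, h2, h3]; simp [lin]; field_simp
      linear_combination ((w 0) ^ 2 * (u * w 0 + v * w 1)) * hr

lemma disc_factor {a₀ a₁ a₂ a₃ u v A B E : ℝ}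
    (h0 : a₀ = u * A) (h1 : 3 * a₁ = u * B + v * A) (h2 : 3 * a₂ = u * E + v * B)
    (h3 : a₃ = v * E) :
    4 * (a₀ * a₂ - a₁ ^ 2) * (a₁ * a₃ - a₂ ^ 2) - (a₀ * a₃ - a₁ * a₂) ^ 2 =
      (B ^ 2 - 4 * A * E) * (A * v ^ 2 - B * u * v + E * u ^ 2) ^ 2 / 27 := by
  have e1 : a₁ = (u * B + v * A) / 3 := by linarith
  have e2 : a₂ = (u * E + v * B) / 3 := by linarith
  rw [h0, e1, e2, h3]
  ring

lemma mem_projRoots (a₀ a₁ a₂ a₃ : ℝ) (w : Fin 2 → ℝ) (hw : w ≠ 0) :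
    Projectivization.mk ℝ w hw ∈ projRoots (cub a₀ a₁ a₂ a₃) ↔
      eval w (cub a₀ a₁ a₂ a₃) = 0 := by
  obtain ⟨a, ha⟩ := Projectivization.exists_smul_eq_mk_rep ℝ w hw
  have ha0 : (a : ℝ) ≠ 0 := a.ne_zero
  simp only [projRoots, Set.mem_setOf_eq]
  rw [← ha, eval_cub, eval_cub]
  simp only [Units.smul_def, Pi.smul_apply, smul_eq_mul]
  constructor
  · intro h
    apply mul_left_cancel₀ (pow_ne_zero 3 ha0)
    linear_combination h
  · intro h
    linear_combination (a : ℝ) ^ 3 * h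

lemma mk_eq_of_line {u v : ℝ} (huv : u ≠ 0 ∨ v ≠ 0) (w z : Fin 2 → ℝ) (hw : w ≠ 0) (hz : z ≠ 0)
    (h1 : u * w 0 + v * w 1 = 0) (h2 : u * z 0 + v * z 1 = 0) :
    Projectivization.mk ℝ w hw = Projectivization.mk ℝ z hz := by
  rw [Projectivization.mk_eq_mk_iff']
  have hdet : w 0 * z 1 = w 1 * z 0 := by
    rcases huv with hu | hv
    · apply mul_left_cancel₀ hu; linear_combination z 1 * h1 - w 1 * h2
    · apply mul_left_cancel₀ hv; linear_combination w 0 * h2 - z 0 * h1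
  by_cases hz0 : z 0 = 0
  · have hz1 : z 1 ≠ 0 := fun h => hz (by ext i; fin_cases i <;> simp [hz0, h])
    refine ⟨w 1 / z 1, ?_⟩
    ext i; fin_cases i <;> simp <;> field_simp
    linarith
  · refine ⟨w 0 / z 0, ?_⟩
    ext i; fin_cases i <;> simp <;> field_simp
    linarith

lemma ncard_iff {a₀ a₁ a₂ a₃ u v A B E : ℝ} (huv : u ≠ 0 ∨ v ≠ 0)
    (h0 : a₀ = u * A) (h1 : 3 * a₁ = u * B + v * A) (h2 : 3 * a₂ = u * E + v * B) (h3 : a₃ = v * E)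
    (hd : B ^ 2 - 4 * A * E ≠ 0) (hr : A * v ^ 2 - B * u * v + E * u ^ 2 ≠ 0) :
    (projRoots (cub a₀ a₁ a₂ a₃)).ncard = 1 ↔ B ^ 2 - 4 * A * E < 0 := by
  have hev : ∀ w : Fin 2 → ℝ, eval w (cub a₀ a₁ a₂ a₃) =
      (u * w 0 + v * w 1) * (A * w 0 ^ 2 + B * w 0 * w 1 + E * w 1 ^ 2) := by
    intro w; rw [eval_cub, h0, h1, h2, h3]; ring
  have hl : (![v, -u] : Fin 2 → ℝ) ≠ 0 := by
    intro h
    have g0 := congrFun h 0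
    have g1 := congrFun h 1
    simp at g0 g1
    tauto
  have hlm : Projectivization.mk ℝ _ hl ∈ projRoots (cub a₀ a₁ a₂ a₃) := by
    rw [mem_projRoots, hev]; simp; left; ring
  rw [Set.ncard_eq_one]
  constructor
  · rintro ⟨p, hp⟩
    by_contra hneg
    have hpos : 0 < B ^ 2 - 4 * A * E := lt_of_le_of_ne (not_lt.mp hneg) (Ne.symm hd)
    obtain ⟨w, hw, hq⟩ : ∃ w : Fin 2 → ℝ, w ≠ 0 ∧
        A * w 0 ^ 2 + B * w 0 * w 1 + E * w 1 ^ 2 = 0 := by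
      by_cases hA : A = 0
      · exact ⟨![1, 0], fun h => by simpa using congrFun h 0, by simp [hA]⟩
      · refine ⟨![-B + √(B ^ 2 - 4 * A * E), 2 * A], fun h => hA (by simpa using congrFun h 1), ?_⟩
        have := Real.sq_sqrt hpos.le
        simp
        linear_combination A * this
    have hwm : Projectivization.mk ℝ _ hw ∈ projRoots (cub a₀ a₁ a₂ a₃) := by
      rw [mem_projRoots, hev, hq, mul_zero]
    rw [hp, Set.mem_singleton_iff] at hlm hwm
    have := hlm.trans hwm.symm
    rw [Projectivization.mk_eq_mk_iff'] at this
    obtain ⟨a, ha⟩ := this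
    have g0 := congrFun ha 0
    have g1 := congrFun ha 1
    simp at g0 g1
    apply hr
    have g1' : u = -(a * w 1) := by linarith
    rw [← g0, g1']
    linear_combination a ^ 2 * hq
  · intro hneg
    refine ⟨_, Set.eq_singleton_iff_unique_mem.mpr ⟨hlm, fun p hp => ?_⟩⟩
    induction p using Projectivization.ind with
    | h w hw =>
      rw [mem_projRoots, hev] at hp
      rcases mul_eq_zero.mp hp with hp | hp
      · exact mk_eq_of_line huv _ _ _ _ hp (by simp; ring)
      · exfalso
        have e1 : (2 * A * w 0 + B * w 1) ^ 2 = (B ^ 2 - 4 * A * E) * w 1 ^ 2 := by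
          linear_combination 4 * A * hp
        have hw1 : w 1 = 0 := by
          by_contra hne
          have : 0 < w 1 ^ 2 := by positivity
          nlinarith [sq_nonneg (2 * A * w 0 + B * w 1)]
        have hA : A ≠ 0 := by rintro rfl; nlinarith [sq_nonneg B]
        have hw0 : w 0 = 0 := by simpa [hw1, hA] using hp
        exact hw (by ext i; fin_cases i <;> simp [hw0, hw1])

lemma decomp_disc {a₀ a₁ a₂ a₃ : ℝ} (h : HasDecomp (cub a₀ a₁ a₂ a₃) 3 2) :
    4 * (a₀ * a₂ - a₁ ^ 2) * (a₁ * a₃ - a₂ ^ 2) - (a₀ * a₃ - a₁ * a₂) ^ 2 ≤ 0 := by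
  obtain ⟨c, p, q, -, h⟩ := h
  have key := fun w : Fin 2 → ℝ => congrArg (eval w) h
  simp only [eval_cub, Fin.sum_univ_two, lin, map_add, map_mul, map_pow, eval_C, eval_X] at key
  have k1 := key ![1, 0]
  have k2 := key ![0, 1]
  have k3 := key ![1, 1]
  have k4 := key ![1, -1]
  simp at k1 k2 k3 k4
  have e1 : a₁ = c 0 * p 0 ^ 2 * q 0 + c 1 * p 1 ^ 2 * q 1 := by
    linear_combination (k3 - k4) / 6 - k2 / 3
  have e2 : a₂ = c 0 * p 0 * q 0 ^ 2 + c 1 * p 1 * q 1 ^ 2 := by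
    linear_combination (k3 + k4) / 6 - k1 / 3
  have : 4 * (a₀ * a₂ - a₁ ^ 2) * (a₁ * a₃ - a₂ ^ 2) - (a₀ * a₃ - a₁ * a₂) ^ 2 =
      - (c 0 * c 1 * (p 0 * q 1 - p 1 * q 0) ^ 3) ^ 2 := by
    rw [k1, k2, e1, e2]; ring
  rw [this]
  exact neg_nonpos.mpr (sq_nonneg _)

lemma decomp_of {a₀ a₁ a₂ a₃ : ℝ} (c₁ c₂ p₁ p₂ q₁ q₂ : ℝ) (n1 : (p₁, q₁) ≠ (0, 0))
    (n2 : (p₂, q₂) ≠ (0, 0))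
    (h0 : a₀ = c₁ * p₁ ^ 3 + c₂ * p₂ ^ 3)
    (h1 : a₁ = c₁ * p₁ ^ 2 * q₁ + c₂ * p₂ ^ 2 * q₂)
    (h2 : a₂ = c₁ * p₁ * q₁ ^ 2 + c₂ * p₂ * q₂ ^ 2)
    (h3 : a₃ = c₁ * q₁ ^ 3 + c₂ * q₂ ^ 3) : HasDecomp (cub a₀ a₁ a₂ a₃) 3 2 := by
  refine ⟨![c₁, c₂], ![p₁, p₂], ![q₁, q₂], ?_, cub_eq fun w => ?_⟩
  · intro j; fin_cases j
    · exact n1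
    · exact n2
  · rw [h0, h1, h2, h3]; simp [lin]; ring

lemma disc_decomp {a₀ a₁ a₂ a₃ : ℝ}
    (h : 4 * (a₀ * a₂ - a₁ ^ 2) * (a₁ * a₃ - a₂ ^ 2) - (a₀ * a₃ - a₁ * a₂) ^ 2 < 0) :
    HasDecomp (cub a₀ a₁ a₂ a₃) 3 2 := by
  obtain ⟨H0, e0⟩ : ∃ H0, H0 = a₀ * a₂ - a₁ ^ 2 := ⟨_, rfl⟩
  obtain ⟨H1, e1⟩ : ∃ H1, H1 = a₀ * a₃ - a₁ * a₂ := ⟨_, rfl⟩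
  obtain ⟨H2, e2⟩ : ∃ H2, H2 = a₁ * a₃ - a₂ ^ 2 := ⟨_, rfl⟩
  have r0 : a₀ * H2 - a₁ * H1 + a₂ * H0 = 0 := by subst e0 e1 e2; ring
  have r1 : a₁ * H2 - a₂ * H1 + a₃ * H0 = 0 := by subst e0 e1 e2; ring
  rw [← e0, ← e1, ← e2] at h
  clear e0 e1 e2
  by_cases hH : H0 = 0
  · subst hH
    have hH1 : H1 ≠ 0 := by rintro rfl; simp at h
    have s1 : a₁ = a₀ * (H2 / H1) := by field_simp; linarith
    have s2 : a₂ = a₁ * (H2 / H1) := by field_simp; linarith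
    refine decomp_of a₀ (a₃ - a₀ * (H2 / H1) ^ 3) 1 0 (H2 / H1) 1 (by simp) (by simp)
      (by ring) ?_ ?_ (by ring)
    · linear_combination s1
    · linear_combination s2 + (H2 / H1) * s1
  · have hs := Real.sq_sqrt (show 0 ≤ H1 ^ 2 - 4 * H0 * H2 by linarith)
    have hsp : √(H1 ^ 2 - 4 * H0 * H2) ≠ 0 := (Real.sqrt_pos.mpr (by linarith)).ne'
    obtain ⟨S, hS⟩ : ∃ S, S = √(H1 ^ 2 - 4 * H0 * H2) := ⟨_, rfl⟩
    rw [← hS] at hs hsp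
    obtain ⟨t, ht⟩ : ∃ t, t = (H1 + S) / (2 * H0) := ⟨_, rfl⟩
    obtain ⟨s, hs'⟩ : ∃ s, s = (H1 - S) / (2 * H0) := ⟨_, rfl⟩
    have hts : t - s ≠ 0 := by
      have : t - s = S / H0 := by rw [ht, hs']; field_simp; ring
      rw [this]; exact div_ne_zero hsp hH
    have hsum : H1 = H0 * (t + s) := by rw [ht, hs']; field_simp; ring
    have hprod : H2 = H0 * (t * s) := by rw [ht, hs']; field_simp; linear_combination hs
    have q2 : a₂ = a₁ * (t + s) - a₀ * (t * s) := by
      apply mul_left_cancel₀ hH; linear_combination r0 - a₀ * hprod + a₁ * hsum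
    have q3 : a₃ = a₂ * (t + s) - a₁ * (t * s) := by
      apply mul_left_cancel₀ hH; linear_combination r1 - a₁ * hprod + a₂ * hsum
    refine decomp_of ((a₁ - a₀ * s) / (t - s)) ((a₀ * t - a₁) / (t - s)) 1 1 t s (by simp) (by simp)
      ?_ ?_ ?_ ?_
    · field_simp; ring
    · field_simp; ring
    · rw [q2]; field_simp; ring
    · rw [q3, q2]; field_simp; ring

lemma rank_iff {f : MvPolynomial (Fin 2) ℝ} (hs : SquarefreeC f) :
    realRank f 3 = 2 ↔ HasDecomp f 3 2 := by
  constructor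
  · intro h
    have hne : {r | HasDecomp f 3 r}.Nonempty := by
      by_contra hc
      rw [Set.not_nonempty_iff_eq_empty] at hc
      simp [realRank, hc] at h
    have := Nat.sInf_mem hne
    unfold realRank at h
    rwa [h] at this
  · intro h
    have hle : realRank f 3 ≤ 2 := Nat.sInf_le h
    have hmem : HasDecomp f 3 (realRank f 3) := Nat.sInf_mem (s := {r | HasDecomp f 3 r}) ⟨2, h⟩
    generalize realRank f 3 = r at hle hmem
    interval_cases r
    · obtain ⟨c, a, b, -, h⟩ := hmem
      exact absurd hs (not_sqfree f 0 0 0 (by simpa using h))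
    · obtain ⟨c, a, b, -, h⟩ := hmem
      refine absurd hs (not_sqfree f (C (c 0) * lin (a 0) (b 0)) (a 0) (b 0) ?_)
      rw [h]; simp; ring
    · rfl

/-- for a real binary cubic with distinct (complex) roots:
real rank 2 ↔ Δ(f) < 0 ↔ exactly one real root. -/
theorem stmt1 (a₀ a₁ a₂ a₃ : ℝ) (f : MvPolynomial (Fin 2) ℝ)
    (hf : f = C a₀ * X 0 ^ 3 + C (3 * a₁) * X 0 ^ 2 * X 1 +
      C (3 * a₂) * X 0 * X 1 ^ 2 + C a₃ * X 1 ^ 3)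
    (hsf : SquarefreeC f) :
    (realRank f 3 = 2 ↔
      4 * (a₀ * a₂ - a₁ ^ 2) * (a₁ * a₃ - a₂ ^ 2) - (a₀ * a₃ - a₁ * a₂) ^ 2 < 0) ∧
    (realRank f 3 = 2 ↔ (projRoots f).ncard = 1) := by
  have hf' : f = cub a₀ a₁ a₂ a₃ := hf
  clear hf
  subst hf'
  obtain ⟨u, v, A, B, E, huv, h0, h1, h2, h3⟩ := exists_factor a₀ a₁ a₂ a₃
  obtain ⟨hd, hr⟩ := factor_nondeg huv h0 h1 h2 h3 hsf
  have hD := disc_factor h0 h1 h2 h3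
  have hr2 : 0 < (A * v ^ 2 - B * u * v + E * u ^ 2) ^ 2 := by positivity
  have hDne : 4 * (a₀ * a₂ - a₁ ^ 2) * (a₁ * a₃ - a₂ ^ 2) - (a₀ * a₃ - a₁ * a₂) ^ 2 ≠ 0 := by
    rw [hD]; exact div_ne_zero (mul_ne_zero hd hr2.ne') (by norm_num)
  have hneg : 4 * (a₀ * a₂ - a₁ ^ 2) * (a₁ * a₃ - a₂ ^ 2) - (a₀ * a₃ - a₁ * a₂) ^ 2 < 0 ↔
      B ^ 2 - 4 * A * E < 0 := by
    rw [hD]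
    constructor
    · intro h
      by_contra hc
      have := mul_nonneg (not_lt.mp hc) hr2.le
      linarith
    · intro h
      have := mul_neg_of_neg_of_pos h hr2
      linarith
  have hrank : realRank (cub a₀ a₁ a₂ a₃) 3 = 2 ↔
      4 * (a₀ * a₂ - a₁ ^ 2) * (a₁ * a₃ - a₂ ^ 2) - (a₀ * a₃ - a₁ * a₂) ^ 2 < 0 := by
    rw [rank_iff hsf]
    exact ⟨fun h => lt_of_le_of_ne (decomp_disc h) hDne, disc_decomp⟩
  exact ⟨hrank, by rw [hrank, hneg, ncard_iff huv h0 h1 h2 h3 hd hr]⟩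
end
end

section
/- Let f be a real binary cubic form with distinct roots (squarefree over ℂ). Then the following are equivalent: (1) the real rank of f is 3; (2) Δ(f) > 0; (3) f has three distinct real roots. -/
open MvPolynomial

noncomputable section

theorem aux_sqf (f : MvPolynomial (Fin 2) ℝ) (p q : ℝ) (h : (p, q) ≠ (0, 0))
    (g : MvPolynomial (Fin 2) ℝ) (hf : f = lin p q * lin p q * g) : ¬ SquarefreeC f := by
  intro hs
  have hu := hs (MvPolynomial.map (algebraMap ℝ ℂ) (lin p q))
    ⟨MvPolynomial.map (algebraMap ℝ ℂ) g, by rw [hf]; simp only [map_mul]⟩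
  by_cases hq : p = 0 ∧ q = 0
  · exact h (by rw [hq.1, hq.2])
  have := hu.map (MvPolynomial.eval (![-(q : ℂ), (p : ℂ)]))
  simp [lin] at this
  apply this
  ring

theorem aux_disc (a₀ a₁ a₂ a₃ : ℝ) (f : MvPolynomial (Fin 2) ℝ)
    (hf : f = C a₀ * X 0 ^ 3 + C (3 * a₁) * X 0 ^ 2 * X 1 +
      C (3 * a₂) * X 0 * X 1 ^ 2 + C a₃ * X 1 ^ 3)
    (hsf : SquarefreeC f)
    (hd : 4 * (a₀ * a₂ - a₁ ^ 2) * (a₁ * a₃ - a₂ ^ 2) - (a₀ * a₃ - a₁ * a₂) ^ 2 = 0) : False := by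
  by_cases hP : a₀ * a₂ - a₁ ^ 2 = 0
  · have hQ : a₀ * a₃ - a₁ * a₂ = 0 := by
      rw [hP] at hd; simpa using hd
    by_cases hR : a₁ * a₃ - a₂ ^ 2 = 0
    · by_cases h0 : a₀ = 0
      · have h1 : a₁ = 0 := by rw [h0] at hP; simpa using hP
        have h2 : a₂ = 0 := by rw [h1] at hR; simpa using hR
        refine aux_sqf f 0 1 (by simp) (lin 0 a₃) ?_ hsf
        rw [hf]; apply MvPolynomial.funext; intro x
        simp [lin, h0, h1, h2]; ring
      · refine aux_sqf f a₀ a₁ (by simp [h0]) (lin (a₀ / a₀ ^ 2) (a₁ / a₀ ^ 2)) ?_ hsf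
        rw [hf]; apply MvPolynomial.funext; intro x
        have e2 : a₂ = a₁ ^ 2 / a₀ := by field_simp; linarith
        have e3 : a₃ = a₁ ^ 3 / a₀ ^ 2 := by
          have : a₃ = a₁ * a₂ / a₀ := by field_simp; linarith
          rw [this, e2]; field_simp
        simp [lin]; rw [e2, e3]; field_simp; ring
    · set P := a₀ * a₂ - a₁ ^ 2 with hPd
      set Q := a₀ * a₃ - a₁ * a₂ with hQd
      set R := a₁ * a₃ - a₂ ^ 2 with hRd
      refine aux_sqf f 0 1 (by simp) (lin (3 * a₂) a₃) ?_ hsf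
      -- root form y
      have h3 : a₀ * R = 0 := by
        rw [hRd]; linear_combination a₁ * hQ - a₂ * hP
      have h0 : a₀ = 0 := by simpa [hR] using h3
      have h1 : a₁ = 0 := by rw [hPd, h0] at hP; simpa using hP
      rw [hf]; apply MvPolynomial.funext; intro x
      simp [lin, h0, h1]; ring
  · refine aux_sqf f (2 * (a₀ * a₂ - a₁ ^ 2)) (a₀ * a₃ - a₁ * a₂) (by simp [hP])
      (lin (a₀ / (4 * (a₀ * a₂ - a₁ ^ 2) ^ 2))
        ((3 * a₁ - a₀ * (a₀ * a₃ - a₁ * a₂) / (a₀ * a₂ - a₁ ^ 2)) / (4 * (a₀ * a₂ - a₁ ^ 2) ^ 2))) ?_ hsf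
    obtain ⟨P, hPd⟩ : ∃ P, P = a₀ * a₂ - a₁ ^ 2 := ⟨_, rfl⟩
    obtain ⟨Q, hQd⟩ : ∃ Q, Q = a₀ * a₃ - a₁ * a₂ := ⟨_, rfl⟩
    obtain ⟨R, hRd⟩ : ∃ R, R = a₁ * a₃ - a₂ ^ 2 := ⟨_, rfl⟩
    rw [← hPd, ← hQd]
    rw [← hPd, ← hQd, ← hRd] at hd
    rw [← hPd] at hP
    have s1 : a₀ * R - a₁ * Q + a₂ * P = 0 := by rw [hPd, hQd, hRd]; ring
    have s2 : a₁ * R - a₂ * Q + a₃ * P = 0 := by rw [hPd, hQd, hRd]; ring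
    have k1 : 3 * a₂ * (4 * P ^ 3) = a₀ * Q ^ 2 * P + (3 * a₁ * P - a₀ * Q) * (4 * P * Q) := by
      linear_combination 12 * P ^ 2 * s1 - 3 * a₀ * P * hd
    have k2 : a₃ * (4 * P ^ 3) = (3 * a₁ * P - a₀ * Q) * Q ^ 2 := by
      linear_combination 4 * P ^ 2 * s2 + 4 * P * Q * s1 - (a₁ * P + a₀ * Q) * hd
    rw [hf]; apply MvPolynomial.funext; intro x
    simp [lin]; field_simp
    linear_combination (x 0 * x 1 ^ 2) * k1 + x 1 ^ 3 * k2

theorem aux_factor (a₀ a₁ a₂ a₃ : ℝ) : ∃ u v A B D : ℝ, u ^ 2 + v ^ 2 = 1 ∧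
    a₀ = u * A ∧ 3 * a₁ = u * B + v * A ∧ 3 * a₂ = u * D + v * B ∧ a₃ = v * D := by
  have hc : ContinuousOn (fun t : ℝ => a₀ * Real.cos t ^ 3 + 3 * a₁ * Real.cos t ^ 2 * Real.sin t +
    3 * a₂ * Real.cos t * Real.sin t ^ 2 + a₃ * Real.sin t ^ 3) (Set.uIcc 0 Real.pi) := by
    fun_prop
  have := intermediate_value_uIcc hc
  have h0 : (0 : ℝ) ∈ Set.uIcc (a₀ * Real.cos 0 ^ 3 + 3 * a₁ * Real.cos 0 ^ 2 * Real.sin 0 +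
    3 * a₂ * Real.cos 0 * Real.sin 0 ^ 2 + a₃ * Real.sin 0 ^ 3) (a₀ * Real.cos Real.pi ^ 3 + 3 * a₁ * Real.cos Real.pi ^ 2 * Real.sin Real.pi +
    3 * a₂ * Real.cos Real.pi * Real.sin Real.pi ^ 2 + a₃ * Real.sin Real.pi ^ 3) := by
    simp [Set.mem_uIcc]
    rcases le_total a₀ 0 with h | h
    · left; constructor <;> nlinarith
    · right; constructor <;> nlinarith
  obtain ⟨t, -, ht⟩ := this h0
  have hs := Real.sin_sq_add_cos_sq t
  simp only at ht
  generalize Real.cos t = p at *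
  generalize Real.sin t = q at *
  refine ⟨q, -p, a₀ * q + p * q * (p * a₀ + 3 * q * a₁ - 3 * p * a₂ - q * a₃) - 3 * a₁ * p,
    p * a₀ + 3 * q * a₁ - 3 * p * a₂ - q * a₃,
    q * (3 * a₂ + p * (p * a₀ + 3 * q * a₁ - 3 * p * a₂ - q * a₃)) - a₃ * p, by linarith, ?_, ?_, ?_, ?_⟩
  · grind
  · grind
  · grind
  · grind

theorem aux_quad (A B D : ℝ) (h : 0 < B ^ 2 - 4 * A * D) : ∃ α β γ δ : ℝ,
    A = α * γ ∧ B = α * δ + β * γ ∧ D = β * δ := by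
  by_cases hA : A = 0
  · exact ⟨0, 1, B, D, by simp [hA], by ring, by ring⟩
  · have hs := Real.sq_sqrt h.le
    generalize √(B ^ 2 - 4 * A * D) = s at hs
    refine ⟨1, (B + s) / (2 * A), A, (B - s) / 2, by ring, ?_, ?_⟩
    · field_simp; ring
    · field_simp; linarith

theorem aux_rank2 (a₀ a₁ a₂ a₃ : ℝ) (f : MvPolynomial (Fin 2) ℝ)
    (hf : f = C a₀ * X 0 ^ 3 + C (3 * a₁) * X 0 ^ 2 * X 1 +
      C (3 * a₂) * X 0 * X 1 ^ 2 + C a₃ * X 1 ^ 3)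
    (hd : 4 * (a₀ * a₂ - a₁ ^ 2) * (a₁ * a₃ - a₂ ^ 2) - (a₀ * a₃ - a₁ * a₂) ^ 2 < 0) :
    HasDecomp f 3 2 := by
  obtain ⟨α, β, γ, δ, hP, hQ, hR⟩ := aux_quad (a₀ * a₂ - a₁ ^ 2) (a₀ * a₃ - a₁ * a₂)
    (a₁ * a₃ - a₂ ^ 2) (by linarith)
  obtain ⟨D, hD⟩ : ∃ D, D = α * δ - β * γ := ⟨_, rfl⟩
  have hD0 : D ≠ 0 := by
    rintro rfl
    rw [hP, hQ, hR] at hd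
    have : (α * δ - β * γ) ^ 2 = 0 := by rw [← hD]; ring
    nlinarith
  obtain ⟨c, hc⟩ : ∃ c, c = a₀ * δ ^ 3 - 3 * a₁ * δ ^ 2 * γ + 3 * a₂ * δ * γ ^ 2 - a₃ * γ ^ 3 := ⟨_, rfl⟩
  obtain ⟨e, he⟩ : ∃ e, e = - a₀ * β ^ 3 + 3 * a₁ * β ^ 2 * α - 3 * a₂ * β * α ^ 2 + a₃ * α ^ 3 := ⟨_, rfl⟩
  obtain ⟨m, hm⟩ : ∃ m, m = - a₀ * δ ^ 2 * β + a₁ * (δ ^ 2 * α + 2 * δ * γ * β)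
    + a₂ * (-2 * δ * γ * α - γ ^ 2 * β) + a₃ * γ ^ 2 * α := ⟨_, rfl⟩
  obtain ⟨n, hn⟩ : ∃ n, n = a₀ * β ^ 2 * δ + a₁ * (- β ^ 2 * γ - 2 * β * α * δ)
    + a₂ * (2 * β * α * γ + α ^ 2 * δ) - a₃ * α ^ 2 * γ := ⟨_, rfl⟩
  have r1 : c * n - m ^ 2 = 0 := by
    have : c * n - m ^ 2 = D ^ 2 * ((a₀ * a₂ - a₁ ^ 2) * δ ^ 2 - (a₀ * a₃ - a₁ * a₂) * δ * γ
      + (a₁ * a₃ - a₂ ^ 2) * γ ^ 2) := by rw [hc, hn, hm, hD]; ring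
    rw [this, hP, hQ, hR]; ring
  have r2 : m * e - n ^ 2 = 0 := by
    have : m * e - n ^ 2 = D ^ 2 * ((a₀ * a₂ - a₁ ^ 2) * β ^ 2 - (a₀ * a₃ - a₁ * a₂) * β * α
      + (a₁ * a₃ - a₂ ^ 2) * α ^ 2) := by rw [he, hn, hm, hD]; ring
    rw [this, hP, hQ, hR]; ring
  have r3 : c * e - m * n ≠ 0 := by
    have : c * e - m * n = D ^ 2 * (-2 * (a₀ * a₂ - a₁ ^ 2) * β * δ
      + (a₀ * a₃ - a₁ * a₂) * (α * δ + β * γ)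
      - 2 * (a₁ * a₃ - a₂ ^ 2) * α * γ) := by rw [hc, he, hn, hm, hD]; ring
    have : c * e - m * n = D ^ 4 := by rw [this, hP, hQ, hR, hD]; ring
    rw [this]; exact pow_ne_zero _ hD0
  have hm0 : m = 0 := by
    by_contra h
    have : m * (c * e - m * n) = 0 := by linear_combination c * r2 + n * r1
    exact (mul_ne_zero h r3) this
  have hn0 : n = 0 := by rw [hm0] at r2; simpa using r2
  refine ⟨![c / D ^ 3, e / D ^ 3], ![α, γ], ![β, δ], ?_, ?_⟩
  · intro j h
    apply hD0
    fin_cases j <;> simp at h <;> rw [hD, h.1, h.2] <;> ring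
  · have q0 : D ^ 3 * a₀ = c * α ^ 3 + e * γ ^ 3 + 3 * m * α ^ 2 * γ + 3 * n * α * γ ^ 2 := by
      rw [hc, he, hn, hm, hD]; ring
    have q1 : D ^ 3 * a₁ = c * α ^ 2 * β + e * γ ^ 2 * δ + m * (α ^ 2 * δ + 2 * α * β * γ)
        + n * (2 * α * γ * δ + β * γ ^ 2) := by
      rw [hc, he, hn, hm, hD]; ring
    have q2 : D ^ 3 * a₂ = c * α * β ^ 2 + e * γ * δ ^ 2 + m * (β ^ 2 * γ + 2 * α * β * δ)
        + n * (2 * β * γ * δ + α * δ ^ 2) := by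
      rw [hc, he, hn, hm, hD]; ring
    have q3 : D ^ 3 * a₃ = c * β ^ 3 + e * δ ^ 3 + 3 * m * β ^ 2 * δ + 3 * n * β * δ ^ 2 := by
      rw [hc, he, hn, hm, hD]; ring
    rw [hm0, hn0] at q0 q1 q2 q3
    rw [hf]; apply MvPolynomial.funext; intro x
    simp [lin, Fin.sum_univ_succ]
    field_simp
    linear_combination x 0 ^ 3 * q0 + 3 * x 0 ^ 2 * x 1 * q1 + 3 * x 0 * x 1 ^ 2 * q2 + x 1 ^ 3 * q3

theorem aux_lower (a₀ a₁ a₂ a₃ : ℝ) (f : MvPolynomial (Fin 2) ℝ)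
    (hf : f = C a₀ * X 0 ^ 3 + C (3 * a₁) * X 0 ^ 2 * X 1 +
      C (3 * a₂) * X 0 * X 1 ^ 2 + C a₃ * X 1 ^ 3)
    (hd : 0 < 4 * (a₀ * a₂ - a₁ ^ 2) * (a₁ * a₃ - a₂ ^ 2) - (a₀ * a₃ - a₁ * a₂) ^ 2)
    (r : ℕ) (hr : HasDecomp f 3 r) : 3 ≤ r := by
  by_contra hlt
  have key : ∃ c a b c' a' b' : ℝ, ∀ x : Fin 2 → ℝ, eval x f =
      c * (a * x 0 + b * x 1) ^ 3 + c' * (a' * x 0 + b' * x 1) ^ 3 := by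
    obtain ⟨c, a, b, -, h⟩ := hr
    have : r = 0 ∨ r = 1 ∨ r = 2 := by omega
    rcases this with rfl | rfl | rfl
    · exact ⟨0, 0, 0, 0, 0, 0, fun x => by rw [h]; simp⟩
    · exact ⟨c 0, a 0, b 0, 0, 0, 0, fun x => by rw [h]; simp [lin]⟩
    · exact ⟨c 0, a 0, b 0, c 1, a 1, b 1, fun x => by rw [h]; simp [lin, Fin.sum_univ_succ]⟩
  obtain ⟨c, a, b, c', a', b', h⟩ := key
  rw [hf] at h
  have h0 := h ![1, 0]
  have h1 := h ![0, 1]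
  have h2 := h ![1, 1]
  have h3 := h ![1, -1]
  simp at h0 h1 h2 h3
  have e1 : a₁ = c * a ^ 2 * b + c' * a' ^ 2 * b' := by linarith
  have e2 : a₂ = c * a * b ^ 2 + c' * a' * b' ^ 2 := by linarith
  rw [h0, h1, e1, e2] at hd
  have : 0 ≤ (c * c' * (a * b' - a' * b) ^ 3) ^ 2 := sq_nonneg _
  linarith

theorem mk_iff (v w : Fin 2 → ℝ) (hv : v ≠ 0) (hw : w ≠ 0) :
    Projectivization.mk ℝ v hv = Projectivization.mk ℝ w hw ↔ v 0 * w 1 = v 1 * w 0 := by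
  rw [Projectivization.mk_eq_mk_iff']
  constructor
  · rintro ⟨a, rfl⟩
    simp; ring
  · intro h
    by_cases h0 : w 0 = 0
    · have h1 : w 1 ≠ 0 := fun h1 => hw (by ext i; fin_cases i <;> simp [h0, h1])
      refine ⟨v 1 / w 1, ?_⟩
      ext i; fin_cases i
      · simp [h0] at h ⊢; simp [h1] at h; exact h.symm
      · simp; field_simp
    · refine ⟨v 0 / w 0, ?_⟩
      ext i; fin_cases i
      · simp; field_simp
      · simp; field_simp; linarith

theorem rep_iff (p : Projectivization ℝ (Fin 2 → ℝ)) (w : Fin 2 → ℝ) (hw : w ≠ 0) :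
    p = Projectivization.mk ℝ w hw ↔ p.rep 0 * w 1 = p.rep 1 * w 0 := by
  rw [← mk_iff p.rep w p.rep_nonzero hw, Projectivization.mk_rep]

theorem aux_neg (a₀ a₁ a₂ a₃ : ℝ) (f : MvPolynomial (Fin 2) ℝ)
    (hf : f = C a₀ * X 0 ^ 3 + C (3 * a₁) * X 0 ^ 2 * X 1 +
      C (3 * a₂) * X 0 * X 1 ^ 2 + C a₃ * X 1 ^ 3)
    (hd : 4 * (a₀ * a₂ - a₁ ^ 2) * (a₁ * a₃ - a₂ ^ 2) - (a₀ * a₃ - a₁ * a₂) ^ 2 < 0) :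
    (projRoots f).ncard ≤ 1 := by
  obtain ⟨u, v, A, B, D, huv, h0, h1, h2, h3⟩ := aux_factor a₀ a₁ a₂ a₃
  have hdd : 27 * (4 * (a₀ * a₂ - a₁ ^ 2) * (a₁ * a₃ - a₂ ^ 2) - (a₀ * a₃ - a₁ * a₂) ^ 2) =
      (B ^ 2 - 4 * A * D) * (A * v ^ 2 - B * u * v + D * u ^ 2) ^ 2 := by
    have e1 : a₁ = (u * B + v * A) / 3 := by linarith
    have e2 : a₂ = (u * D + v * B) / 3 := by linarith
    rw [h0, e1, e2, h3]; ring
  have hdisc : B ^ 2 - 4 * A * D < 0 := by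
    by_contra h
    have := mul_nonneg (not_lt.mp h) (sq_nonneg (A * v ^ 2 - B * u * v + D * u ^ 2))
    linarith
  have hw : (![-v, u] : Fin 2 → ℝ) ≠ 0 := by
    intro h
    have e0 := congrFun h 0
    have e1 := congrFun h 1
    simp at e0 e1
    rw [e0, e1] at huv; norm_num at huv
  have : projRoots f ⊆ {Projectivization.mk ℝ _ hw} := by
    intro p hp
    rw [Set.mem_singleton_iff, rep_iff]
    have hp' : eval p.rep f = 0 := hp
    have hn := p.rep_nonzero
    generalize p.rep = x at *
    have : (u * x 0 + v * x 1) * (A * x 0 ^ 2 + B * x 0 * x 1 + D * x 1 ^ 2) = 0 := by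
      rw [← hp', hf]; simp
      linear_combination - x 0 ^ 3 * h0 - x 0 ^ 2 * x 1 * h1 - x 0 * x 1 ^ 2 * h2 - x 1 ^ 3 * h3
    rcases mul_eq_zero.mp this with h | h
    · simp; linarith
    · exfalso
      apply hn
      have y0 : x 1 = 0 := by
        by_contra hne
        have : 0 < x 1 ^ 2 := by positivity
        have e : (2 * A * x 0 + B * x 1) ^ 2 = (B ^ 2 - 4 * A * D) * x 1 ^ 2 := by
          linear_combination 4 * A * h
        have := mul_neg_of_neg_of_pos hdisc this
        linarith [sq_nonneg (2 * A * x 0 + B * x 1)]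
      have x0 : x 0 = 0 := by
        by_contra hne
        have : 0 < x 0 ^ 2 := by positivity
        have e : (2 * D * x 1 + B * x 0) ^ 2 = (B ^ 2 - 4 * A * D) * x 0 ^ 2 := by
          linear_combination 4 * D * h
        have := mul_neg_of_neg_of_pos hdisc this
        linarith [sq_nonneg (2 * D * x 1 + B * x 0)]
      ext i; fin_cases i <;> simp [x0, y0]
  exact (Set.ncard_le_ncard this (Set.finite_singleton _)).trans (by simp)

theorem aux_split (a₀ a₁ a₂ a₃ : ℝ) (f : MvPolynomial (Fin 2) ℝ)
    (hf : f = C a₀ * X 0 ^ 3 + C (3 * a₁) * X 0 ^ 2 * X 1 +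
      C (3 * a₂) * X 0 * X 1 ^ 2 + C a₃ * X 1 ^ 3)
    (hd : 0 < 4 * (a₀ * a₂ - a₁ ^ 2) * (a₁ * a₃ - a₂ ^ 2) - (a₀ * a₃ - a₁ * a₂) ^ 2) :
    ∃ u v α β γ δ : ℝ, f = lin u v * lin α β * lin γ δ ∧ u * β - v * α ≠ 0 ∧
      u * δ - v * γ ≠ 0 ∧ α * δ - β * γ ≠ 0 := by
  obtain ⟨u, v, A, B, D, huv, h0, h1, h2, h3⟩ := aux_factor a₀ a₁ a₂ a₃
  have e1 : a₁ = (u * B + v * A) / 3 := by linarith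
  have e2 : a₂ = (u * D + v * B) / 3 := by linarith
  have hdd : 27 * (4 * (a₀ * a₂ - a₁ ^ 2) * (a₁ * a₃ - a₂ ^ 2) - (a₀ * a₃ - a₁ * a₂) ^ 2) =
      (B ^ 2 - 4 * A * D) * (A * v ^ 2 - B * u * v + D * u ^ 2) ^ 2 := by
    rw [h0, e1, e2, h3]; ring
  have hdisc : 0 < B ^ 2 - 4 * A * D := by
    by_contra h
    have := mul_nonneg (neg_nonneg.mpr (not_lt.mp h)) (sq_nonneg (A * v ^ 2 - B * u * v + D * u ^ 2))
    linarith
  obtain ⟨α, β, γ, δ, hA, hB, hD⟩ := aux_quad A B D hdisc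
  have hne : ((u * β - v * α) * (u * δ - v * γ) * (α * δ - β * γ)) ^ 2 ≠ 0 := by
    have : ((u * β - v * α) * (u * δ - v * γ) * (α * δ - β * γ)) ^ 2 = (B ^ 2 - 4 * A * D) * (A * v ^ 2 - B * u * v + D * u ^ 2) ^ 2 := by
      rw [hA, hB, hD]; ring
    rw [this, ← hdd]; linarith
  have hne' := pow_ne_zero_iff (two_ne_zero) |>.mp hne
  simp only [mul_ne_zero_iff] at hne'
  refine ⟨u, v, α, β, γ, δ, ?_, hne'.1.1, hne'.1.2, hne'.2⟩
  rw [hf]; apply MvPolynomial.funext; intro x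
  simp [lin]
  rw [h0, e1, e2, h3, hA, hB, hD]; ring

theorem ne_of_det (a b c d : ℝ) (h : a * d - b * c ≠ 0) :
    (a, b) ≠ (0, 0) ∧ (c, d) ≠ (0, 0) := by
  constructor <;> intro h' <;> simp at h' <;> apply h <;> rw [h'.1, h'.2] <;> ring

theorem aux_rank3 (f : MvPolynomial (Fin 2) ℝ) (u v α β γ δ : ℝ)
    (hf : f = lin u v * lin α β * lin γ δ) (h1 : u * β - v * α ≠ 0)
    (h2 : u * δ - v * γ ≠ 0) (h3 : α * δ - β * γ ≠ 0) : HasDecomp f 3 3 := by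
  obtain ⟨k1, hk1⟩ : ∃ k, k = u * β - v * α := ⟨_, rfl⟩
  obtain ⟨k2, hk2⟩ : ∃ k, k = u * δ - v * γ := ⟨_, rfl⟩
  obtain ⟨k3, hk3⟩ : ∃ k, k = α * δ - β * γ := ⟨_, rfl⟩
  have n1 := (ne_of_det _ _ _ _ h1)
  have n2 := (ne_of_det _ _ _ _ h2)
  rw [← hk1] at h1
  rw [← hk2] at h2
  rw [← hk3] at h3
  refine ⟨![- k3 ^ 2 / (3 * k1 * k2), k2 ^ 2 / (3 * k1 * k3), - k1 ^ 2 / (3 * k2 * k3)],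
    ![u, α, γ], ![v, β, δ], ?_, ?_⟩
  · intro j
    fin_cases j
    · exact n1.1
    · exact n1.2
    · exact n2.2
  · rw [hf]; apply MvPolynomial.funext; intro x
    simp [lin, Fin.sum_univ_succ]
    field_simp
    rw [hk1, hk2, hk3]; ring

theorem aux_roots3 (f : MvPolynomial (Fin 2) ℝ) (u v α β γ δ : ℝ)
    (hf : f = lin u v * lin α β * lin γ δ) (h1 : u * β - v * α ≠ 0)
    (h2 : u * δ - v * γ ≠ 0) (h3 : α * δ - β * γ ≠ 0) : (projRoots f).ncard = 3 := by
  have aux : ∀ a b : ℝ, (a, b) ≠ (0, 0) → (![-b, a] : Fin 2 → ℝ) ≠ 0 := by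
    intro a b h h'
    apply h
    have e0 := congrFun h' 0
    have e1 := congrFun h' 1
    simp at e0 e1
    rw [e0, e1]
  have w1 := aux _ _ (ne_of_det _ _ _ _ h1).1
  have w2 := aux _ _ (ne_of_det _ _ _ _ h1).2
  have w3 := aux _ _ (ne_of_det _ _ _ _ h2).2
  have : projRoots f = {Projectivization.mk ℝ _ w1, Projectivization.mk ℝ _ w2,
      Projectivization.mk ℝ _ w3} := by
    ext p
    simp only [Set.mem_insert_iff, Set.mem_singleton_iff, rep_iff]
    change eval p.rep f = 0 ↔ _
    rw [hf]
    simp [lin, or_assoc]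
    refine or_congr ?_ (or_congr ?_ ?_) <;> constructor <;> intro h <;> linarith
  rw [this, Set.ncard_eq_three]
  refine ⟨_, _, _, ?_, ?_, ?_, rfl⟩
  · rw [Ne, mk_iff]; simp; intro h; apply h1; linarith
  · rw [Ne, mk_iff]; simp; intro h; apply h2; linarith
  · rw [Ne, mk_iff]; simp; intro h; apply h3; linarith

/-- for a real binary cubic with distinct (complex) roots:
real rank 3 ↔ Δ(f) > 0 ↔ three distinct real roots. -/
theorem stmt2 (a₀ a₁ a₂ a₃ : ℝ) (f : MvPolynomial (Fin 2) ℝ)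
    (hf : f = C a₀ * X 0 ^ 3 + C (3 * a₁) * X 0 ^ 2 * X 1 +
      C (3 * a₂) * X 0 * X 1 ^ 2 + C a₃ * X 1 ^ 3)
    (hsf : SquarefreeC f) :
    (realRank f 3 = 3 ↔
      0 < 4 * (a₀ * a₂ - a₁ ^ 2) * (a₁ * a₃ - a₂ ^ 2) - (a₀ * a₃ - a₁ * a₂) ^ 2) ∧
    (realRank f 3 = 3 ↔ (projRoots f).ncard = 3) := by
  have hne : 4 * (a₀ * a₂ - a₁ ^ 2) * (a₁ * a₃ - a₂ ^ 2) - (a₀ * a₃ - a₁ * a₂) ^ 2 ≠ 0 :=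
    fun h => aux_disc a₀ a₁ a₂ a₃ f hf hsf h
  rcases lt_or_gt_of_ne hne with hd | hd
  · have hr : realRank f 3 ≤ 2 := Nat.sInf_le (aux_rank2 a₀ a₁ a₂ a₃ f hf hd)
    have hn := aux_neg a₀ a₁ a₂ a₃ f hf hd
    refine ⟨⟨fun h => by omega, fun h => absurd h (not_lt.mpr hd.le)⟩,
      ⟨fun h => by omega, fun h => by omega⟩⟩
  · obtain ⟨u, v, α, β, γ, δ, hs, h1, h2, h3⟩ := aux_split a₀ a₁ a₂ a₃ f hf hd
    have h33 := aux_rank3 f u v α β γ δ hs h1 h2 h3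
    have hr : realRank f 3 = 3 :=
      le_antisymm (Nat.sInf_le h33)
        (aux_lower a₀ a₁ a₂ a₃ f hf hd _ (Nat.sInf_mem (s := {r | HasDecomp f 3 r}) ⟨3, h33⟩))
    have hn := aux_roots3 f u v α β γ δ hs h1 h2 h3
    exact ⟨⟨fun _ => hd, fun _ => hr⟩, ⟨fun _ => hn, fun _ => hr⟩⟩
end
end

section
/- Let f be a real binary form of degree d ≥ 1 that factors as a product of d pairwise non-proportional real linear forms (i.e., f has d distinct real roots). Then the real rank of f is exactly d. -/
open MvPolynomial

noncomputable section

def pw (d : ℕ) {r : ℕ} (c a b : Fin r → ℝ) (x y : ℝ) : ℝ := ∑ j, c j * (a j * x + b j * y) ^ d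

set_option maxHeartbeats 1000000 in
open Polynomial in
lemma key_step (r d : ℕ) (hr : r + 1 < d + 1)
    (ih : ∀ (c a b : Fin r → ℝ) (Z : Finset (ℝ × ℝ)), d ≤ Z.card →
      (∀ z ∈ Z, ∀ w ∈ Z, z ≠ w → z.1 * w.2 ≠ w.1 * z.2) →
      (∀ z ∈ Z, pw d c a b z.1 z.2 = 0) → ∀ x y, pw d c a b x y = 0)
    (c a b : Fin (r+1) → ℝ) (h0 : a 0 = 0) (Z : Finset (ℝ × ℝ)) (hZ : d + 1 ≤ Z.card)
    (hp : ∀ z ∈ Z, ∀ w ∈ Z, z ≠ w → z.1 * w.2 ≠ w.1 * z.2)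
    (hz : ∀ z ∈ Z, pw (d+1) c a b z.1 z.2 = 0) (x y : ℝ) : pw (d+1) c a b x y = 0 := by
  classical
  set g : ℝ[X] := ∑ j, Polynomial.C (c j) * (Polynomial.C (a j) * Polynomial.X + Polynomial.C (b j)) ^ (d+1) with hg
  have hgev : ∀ t, g.eval t = pw (d+1) c a b t 1 := by
    intro t; simp [hg, pw, Polynomial.eval_finsetSum]
  have hscale : ∀ s t, s ≠ 0 → pw (d+1) c a b t s = s^(d+1) * g.eval (t/s) := by
    intro s t hs
    rw [hgev]; unfold pw; rw [Finset.mul_sum]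
    refine Finset.sum_congr rfl fun j _ => ?_
    rw [mul_left_comm, ← mul_pow]; congr 2; field_simp
  set c' : Fin r → ℝ := fun j => (d+1) * c j.succ * a j.succ with hc'
  have hder : ∀ t, (derivative g).eval t = pw d c' (fun j => a j.succ) (fun j => b j.succ) t 1 := by
    intro t
    rw [hg, Polynomial.derivative_sum, Polynomial.eval_finsetSum, Fin.sum_univ_succ, pw]
    have e0 : Polynomial.eval t (derivative (Polynomial.C (c 0) * (Polynomial.C (a 0) * Polynomial.X + Polynomial.C (b 0)) ^ (d+1))) = 0 := by
      rw [h0]; simp [derivative_pow]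
    rw [e0, zero_add]
    refine Finset.sum_congr rfl fun j _ => ?_
    simp [derivative_pow, hc']
    ring
  have hinf : pw (d+1) c a b 1 0 = 0 → pw d c' (fun j => a j.succ) (fun j => b j.succ) 1 0 = 0 := by
    intro h
    have : pw d c' (fun j => a j.succ) (fun j => b j.succ) 1 0 = (d+1) * pw (d+1) c a b 1 0 := by
      simp only [pw, Fin.sum_univ_succ, hc', h0, Finset.mul_sum, mul_add]
      simp
      refine Finset.sum_congr rfl fun j _ => ?_
      ring
    rw [this, h, mul_zero]
  set I := Z.filter (fun z => z.2 ≠ 0) with hI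
  set J := Z.filter (fun z => ¬ z.2 ≠ 0) with hJ
  have hIJ : I.card + J.card = Z.card := Finset.card_filter_add_card_filter_not _
  have hJ1 : J.card ≤ 1 := by
    rw [Finset.card_le_one]
    intro z h1 w h2
    by_contra hne
    simp only [hJ, Finset.mem_filter, not_not] at h1 h2
    exact hp z h1.1 w h2.1 hne (by rw [h1.2, h2.2]; simp)
  have hroot : ∀ z ∈ I, g.eval (z.1/z.2) = 0 := by
    intro z h
    simp only [hI, Finset.mem_filter] at h
    have := hz z h.1
    rw [hscale _ _ h.2] at this
    exact (mul_eq_zero.1 this).resolve_left (pow_ne_zero _ h.2)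
  -- g = 0
  have hg0 : g = 0 := by
    by_contra hne
    have hd0 : derivative g = 0 := by
      by_contra hdne
      have hcard : I.card ≤ g.roots.toFinset.card := by
        apply Finset.card_le_card_of_injOn (fun z => z.1/z.2)
        · intro z h
          simpa [hne] using hroot z h
        · intro z h1 w h2 heq
          simp only [hI, Finset.coe_filter, Set.mem_ofPred_eq] at h1 h2
          by_contra hn
          apply hp z h1.1 w h2.1 hn
          have h3 := h1.2
          have h4 := h2.2
          simp only at heq
          field_simp at heq
          linarith
      have hroll := Polynomial.card_roots_toFinset_le_derivative g
      set R := (derivative g).roots.toFinset with hR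
      set Z' : Finset (ℝ × ℝ) := R.image (fun t => (t, (1:ℝ))) ∪ J.image (fun _ => ((1:ℝ), (0:ℝ))) with hZ'
      have hcI : (R.image (fun t => (t, (1:ℝ)))).card = R.card :=
        Finset.card_image_of_injective _ (fun s t h => by simpa using h)
      have hcJ : (J.image (fun _ => ((1:ℝ), (0:ℝ)))).card = J.card := by
        apply Finset.card_image_of_injOn
        intro z h w h' _
        exact Finset.card_le_one.1 hJ1 z h w h'
      have hdisj : Disjoint (R.image (fun t => (t, (1:ℝ)))) (J.image (fun _ => ((1:ℝ), (0:ℝ)))) := by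
        rw [Finset.disjoint_left]
        intro z h1 h2
        simp only [Finset.mem_image] at h1 h2
        obtain ⟨t, _, rfl⟩ := h1
        obtain ⟨_, _, h⟩ := h2
        simp at h
      have hcZ : d ≤ Z'.card := by
        rw [hZ', Finset.card_union_of_disjoint hdisj, hcI, hcJ]; omega
      have hall := ih c' (fun j => a j.succ) (fun j => b j.succ) Z' hcZ (by
        intro z h1 w h2 hn
        simp only [hZ', Finset.mem_union, Finset.mem_image] at h1 h2
        rcases h1 with ⟨t, _, rfl⟩ | ⟨_, _, rfl⟩ <;> rcases h2 with ⟨s, _, rfl⟩ | ⟨_, _, rfl⟩ 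
        · intro h; apply hn; simp only [mul_one] at h; rw [h]
        · simp
        · simp
        · exact absurd rfl hn) (by
        intro z h1
        simp only [hZ', Finset.mem_union, Finset.mem_image] at h1
        rcases h1 with ⟨t, ht, rfl⟩ | ⟨z, hz1, rfl⟩
        · rw [← hder]
          simp only [hR, Multiset.mem_toFinset] at ht
          exact (Polynomial.mem_roots'.1 ht).2
        · apply hinf
          simp only [hJ, Finset.mem_filter, not_not] at hz1
          have h5 := hz z hz1.1
          rw [hz1.2] at h5
          have h6 : pw (d+1) c a b z.1 0 = z.1^(d+1) * pw (d+1) c a b 1 0 := by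
            unfold pw; rw [Finset.mul_sum]
            refine Finset.sum_congr rfl fun j _ => ?_
            simp only [mul_zero, add_zero, mul_one, mul_pow]; ring
          rw [h6] at h5
          refine (mul_eq_zero.1 h5).resolve_left (pow_ne_zero _ ?_)
          intro h7
          obtain ⟨w, hw, hwz⟩ := Finset.exists_mem_ne (show 1 < Z.card by omega) z
          exact hp z hz1.1 w hw hwz.symm (by rw [h7, hz1.2]; simp))
      apply hdne
      apply Polynomial.funext
      intro t
      rw [hder, hall]; simp
    have hI1 : 0 < I.card := by omega
    obtain ⟨z, hzI⟩ := Finset.card_pos.1 hI1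
    have h1 := hroot z hzI
    have h2 := Polynomial.derivative_eq_zero.1 hd0
    rw [Polynomial.eq_C_of_natDegree_eq_zero h2] at h1 hne
    simp at h1 hne
    exact hne h1
  have hc : (fun s => pw (d+1) c a b x s) = fun _ => 0 := by
    refine Continuous.ext_on (s := {(0:ℝ)}ᶜ) (dense_compl_singleton 0) ?_ continuous_const ?_
    · unfold pw; fun_prop
    · intro s hs
      simp only
      rw [hscale s x (by simpa using hs), hg0]; simp
  exact congrFun hc y

lemma key (r : ℕ) : ∀ (d : ℕ), r < d → ∀ (c a b : Fin r → ℝ) (Z : Finset (ℝ × ℝ)), d ≤ Z.card →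
      (∀ z ∈ Z, ∀ w ∈ Z, z ≠ w → z.1 * w.2 ≠ w.1 * z.2) →
      (∀ z ∈ Z, pw d c a b z.1 z.2 = 0) → ∀ x y, pw d c a b x y = 0 := by
  induction r with
  | zero => intros; simp [pw]
  | succ r ih =>
    intro d hd c a b Z hZ hp hz x y
    obtain ⟨d, rfl⟩ : ∃ e, d = e + 1 := ⟨d - 1, by omega⟩
    obtain ⟨α, β, hN, h0⟩ : ∃ α β : ℝ, α^2 + β^2 ≠ 0 ∧ a 0 * β - b 0 * α = 0 := by
      by_cases h : (a 0)^2 + (b 0)^2 = 0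
      · refine ⟨0, 1, by norm_num, ?_⟩
        have : a 0 = 0 := by nlinarith [sq_nonneg (a 0), sq_nonneg (b 0)]
        simp [this]
      · exact ⟨a 0, b 0, h, by ring⟩
    set T : ℝ × ℝ → ℝ × ℝ := fun z => ((z.1 * β - z.2 * α)/(α^2+β^2), (z.1*α + z.2*β)/(α^2+β^2)) with hT
    have hTpw : ∀ u v, pw (d+1) (c) (fun j => a j * β - b j * α) (fun j => a j * α + b j * β) (T (u,v)).1 (T (u,v)).2
        = pw (d+1) c a b u v := by
      intro u v
      unfold pw
      refine Finset.sum_congr rfl fun j _ => ?_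
      congr 2
      simp only [hT]
      field_simp
      ring
    have hTdet : ∀ z w, (T z).1 * (T w).2 - (T w).1 * (T z).2 = (z.1*w.2 - w.1*z.2)/(α^2+β^2) := by
      intro z w
      simp only [hT]
      field_simp
      ring
    have hTinj : Set.InjOn T Z := by
      intro z h1 w h2 h
      by_contra hn
      have := hTdet z w
      rw [h, sub_self, eq_comm, div_eq_zero_iff] at this
      exact hp z h1 w h2 hn (sub_eq_zero.1 (this.resolve_right hN))
    classical
    rw [← hTpw]
    refine key_step r d (by omega) (ih d (by omega)) _ _ _ h0 (Z.image T) ?_ ?_ ?_ _ _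
    · rwa [Finset.card_image_of_injOn hTinj]
    · intro z h1 w h2 hn
      obtain ⟨z, h3, rfl⟩ := Finset.mem_image.1 h1
      obtain ⟨w, h4, rfl⟩ := Finset.mem_image.1 h2
      rw [← sub_ne_zero, hTdet]
      exact div_ne_zero (sub_ne_zero.2 (hp z h3 w h4 (fun h => hn (by rw [h])))) hN
    · intro z h1
      obtain ⟨z, h3, rfl⟩ := Finset.mem_image.1 h1
      exact (hTpw z.1 z.2).trans (hz z h3)

open Polynomial in
lemma cont_func {d : ℕ} (s : Finset (Fin d)) : ∀ L : ℝ[X] →ₗ[ℝ] ℝ,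
    Continuous (fun τ : Fin d → ℝ => L (∏ j ∈ s, (Polynomial.X - Polynomial.C (τ j)))) := by
  classical
  induction s using Finset.induction_on with
  | empty => intro L; simpa using continuous_const
  | insert i s hi ih =>
    intro L
    have h1 := ih (L ∘ₗ LinearMap.mulLeft ℝ Polynomial.X)
    have h2 := ih L
    have : (fun τ : Fin d → ℝ => L (∏ j ∈ insert i s, (Polynomial.X - Polynomial.C (τ j)))) =
      fun τ => (L ∘ₗ LinearMap.mulLeft ℝ Polynomial.X) (∏ j ∈ s, (Polynomial.X - Polynomial.C (τ j)))
        - τ i * L (∏ j ∈ s, (Polynomial.X - Polynomial.C (τ j))) := by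
      funext τ
      rw [Finset.prod_insert hi, sub_mul, map_sub, ← Polynomial.smul_eq_C_mul, map_smul]
      simp
    rw [this]
    exact h1.sub ((continuous_apply i).mul h2)

/-- sign change of a product with simple real roots -/
lemma sign_change {d : ℕ} (hd : 2 ≤ d) (a b : Fin d → ℝ)
    (hab : ∀ i j, i ≠ j → a i * b j ≠ a j * b i) :
    ∃ s t : ℝ, ∏ j, (a j * s + b j) < 0 ∧ 0 < ∏ j, (a j * t + b j) := by
  classical
  obtain ⟨i, hi⟩ : ∃ i, a i ≠ 0 := by
    by_contra h
    push Not at h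
    exact hab ⟨0, by omega⟩ ⟨1, by omega⟩ (by simp) (by simp [h])
  set h : ℝ → ℝ := fun s => ∏ j ∈ Finset.univ.erase i, (a j * s + b j) with hh
  have hP : ∀ s, ∏ j, (a j * s + b j) = (a i * s + b i) * h s := fun s =>
    (Finset.mul_prod_erase Finset.univ (fun j => a j * s + b j) (Finset.mem_univ i)).symm
  have hcont : Continuous h := by fun_prop
  set σ := -b i / a i with hσ
  have hne : h σ ≠ 0 := by
    rw [hh]
    refine Finset.prod_ne_zero_iff.2 fun j hj => ?_
    intro h0
    apply hab i j (Finset.ne_of_mem_erase hj).symm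
    rw [hσ] at h0
    field_simp at h0
    linarith
  have hev : ∀ᶠ δ in nhds (0:ℝ), 0 < h (σ + δ) * h (σ - δ) := by
    have hc : Continuous (fun δ => h (σ + δ) * h (σ - δ)) := by fun_prop
    refine hc.continuousAt.eventually (lt_mem_nhds ?_)
    simpa using hne
  obtain ⟨δ, hδ, hδ0⟩ := ((hev.filter_mono nhdsWithin_le_nhds).and
    (self_mem_nhdsWithin (s := Set.Ioi (0:ℝ)))).exists
  have hδ0 : 0 < δ := hδ0
  have e1 : a i * (σ + δ) + b i = a i * δ := by rw [hσ]; field_simp; ring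
  have e2 : a i * (σ - δ) + b i = -(a i * δ) := by rw [hσ]; field_simp; ring
  have hprod : (∏ j, (a j * (σ+δ) + b j)) * (∏ j, (a j * (σ-δ) + b j)) < 0 := by
    rw [hP, hP, e1, e2]
    have : 0 < (a i * δ)^2 := by positivity
    nlinarith [mul_pos this hδ]
  rcases mul_neg_iff.1 hprod with ⟨h1, h2⟩ | ⟨h1, h2⟩
  · exact ⟨_, _, h2, h1⟩
  · exact ⟨_, _, h1, h2⟩

open Polynomial in
/-- quadrature -/
lemma quad {d : ℕ} (L : ℝ[X] →ₗ[ℝ] ℝ) (τ : Fin d → ℝ) (hτ : Function.Injective τ)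
    (h : L (∏ j, (Polynomial.X - Polynomial.C (τ j))) = 0) :
    ∃ c : Fin d → ℝ, ∀ i ≤ d, L (Polynomial.X ^ i) = ∑ j, c j * τ j ^ i := by
  classical
  have hlow : ∀ p : ℝ[X], p.degree < d → L p = ∑ j, L (Lagrange.basis Finset.univ τ j) * p.eval (τ j) := by
    intro p hp
    have := Lagrange.eq_interpolate (s := Finset.univ) (v := τ) hτ.injOn (f := p) (by simpa using hp)
    conv_lhs => rw [this, Lagrange.interpolate_apply, map_sum]
    refine Finset.sum_congr rfl fun j _ => ?_
    rw [← Polynomial.smul_eq_C_mul, map_smul, smul_eq_mul, mul_comm]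
  refine ⟨fun j => L (Lagrange.basis Finset.univ τ j), fun i hi => ?_⟩
  rcases hi.lt_or_eq with hi | rfl
  · rw [hlow _ (by rw [Polynomial.degree_X_pow]; exact_mod_cast hi)]; simp
  · set g : ℝ[X] := ∏ j, (Polynomial.X - Polynomial.C (τ j)) with hg
    have hgm : g.Monic := Polynomial.monic_prod_of_monic _ _ fun j _ => Polynomial.monic_X_sub_C _
    have hgd : g.degree = i := by
      rw [hg, Polynomial.degree_prod]; simp
    have hlt : (Polynomial.X ^ i - g : ℝ[X]).degree < i := by
      have := Polynomial.degree_sub_lt_left (p := (Polynomial.X ^ i : ℝ[X])) (q := g) (by simp [hgd])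
        (by simp) (by simp [hgm.leadingCoeff])
      simpa using this
    have h2 := hlow _ hlt
    rw [map_sub, h, sub_zero] at h2
    rw [h2]
    refine Finset.sum_congr rfl fun j _ => ?_
    have : g.eval (τ j) = 0 := by
      rw [hg, Polynomial.eval_prod]
      exact Finset.prod_eq_zero (Finset.mem_univ j) (by simp)
    simp [this]

open Polynomial in
lemma upper {d : ℕ} (P : ℝ[X]) (hP : P.natDegree ≤ d) (s t : ℝ) (hs : P.eval s < 0) (ht : 0 < P.eval t) :
    ∃ c τ : Fin d → ℝ, P = ∑ j, Polynomial.C (c j) * (Polynomial.X + Polynomial.C (τ j)) ^ d := by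
  classical
  -- L (X^i) = coeff (d-i) / choose
  set L : ℝ[X] →ₗ[ℝ] ℝ := ∑ i ∈ Finset.range (d+1), (P.coeff (d - i) / (d.choose i : ℝ)) • Polynomial.lcoeff ℝ i with hL
  have hLX : ∀ i ≤ d, L (Polynomial.X ^ i) = P.coeff (d - i) / (d.choose i : ℝ) := by
    intro i hi
    simp only [hL, LinearMap.sum_apply, LinearMap.smul_apply, Polynomial.lcoeff_apply, Polynomial.coeff_X_pow, smul_eq_mul]
    rw [Finset.sum_eq_single i]
    · simp
    · intro j _ hj; simp [hj]
    · intro h; simp at h; omega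
  have hLpow : ∀ u : ℝ, L ((Polynomial.X - Polynomial.C (-u)) ^ d) = P.eval u := by
    intro u
    rw [map_neg, sub_neg_eq_add, add_pow, map_sum, Polynomial.eval_eq_sum_range' (n := d+1) (by omega),
      ← Finset.sum_range_reflect (fun k => P.coeff k * u ^ k)]
    refine Finset.sum_congr rfl fun i hi => ?_
    have hi : i ≤ d := by simp at hi; omega
    have hch : (d.choose i : ℝ) ≠ 0 := by exact_mod_cast (Nat.choose_pos hi).ne'
    have e : (Polynomial.X ^ i * Polynomial.C u ^ (d - i) * (d.choose i : ℝ[X])) = (u^(d-i) * (d.choose i : ℝ)) • Polynomial.X ^ i := by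
      rw [Polynomial.smul_eq_C_mul]; simp; ring
    rw [e, map_smul, hLX i hi, smul_eq_mul]
    have : d + 1 - 1 - i = d - i := by omega
    rw [this]
    field_simp
  set Φ : (Fin d → ℝ) → ℝ := fun τ => L (∏ j, (Polynomial.X - Polynomial.C (τ j))) with hΦ
  have hΦc : Continuous Φ := cont_func Finset.univ L
  set φ : ℝ → ℝ → ℝ := fun ε u => Φ (fun j => -u + ε * (j : ℕ)) with hφ
  have hφ0 : ∀ u, φ 0 u = P.eval u := by
    intro u
    simp only [hφ, hΦ, zero_mul, add_zero, Finset.prod_const, Finset.card_univ, Fintype.card_fin, hLpow]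
  have hc1 : ∀ u, Continuous (fun ε => φ ε u) := fun u => hΦc.comp (by fun_prop)
  have hc2 : ∀ ε, Continuous (φ ε) := fun ε => hΦc.comp (by fun_prop)
  have ev1 : ∀ᶠ ε in nhds (0:ℝ), φ ε s < 0 :=
    (hc1 s).continuousAt.eventually (gt_mem_nhds (by simp only [hφ0]; exact hs))
  have ev2 : ∀ᶠ ε in nhds (0:ℝ), 0 < φ ε t :=
    (hc1 t).continuousAt.eventually (lt_mem_nhds (by simp only [hφ0]; exact ht))
  obtain ⟨ε, ⟨h1, h2⟩, hε⟩ := (((ev1.and ev2).filter_mono nhdsWithin_le_nhds).and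
    (self_mem_nhdsWithin (s := Set.Ioi (0:ℝ)))).exists
  have hε : 0 < ε := hε
  obtain ⟨u, hu⟩ := mem_range_of_exists_le_of_exists_ge (hc2 ε) ⟨s, h1.le⟩ ⟨t, h2.le⟩
  obtain ⟨c, hc⟩ := quad L (fun j : Fin d => -u + ε * (j : ℕ)) (by
    intro i j hij
    simp only [add_right_inj, mul_eq_mul_left_iff, hε.ne', or_false, Nat.cast_inj] at hij
    exact Fin.ext hij) hu
  refine ⟨c, fun j => -u + ε * (j : ℕ), ?_⟩
  ext k
  simp only [Polynomial.finsetSum_coeff, Polynomial.coeff_C_mul, Polynomial.coeff_X_add_C_pow]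
  by_cases hk : k ≤ d
  · have h3 := hc (d - k) (by omega)
    rw [hLX _ (by omega), Nat.sub_sub_self hk, Nat.choose_symm hk] at h3
    have hch : (d.choose k : ℝ) ≠ 0 := by exact_mod_cast (Nat.choose_pos hk).ne'
    rw [div_eq_iff hch] at h3
    rw [h3, Finset.sum_mul]
    exact Finset.sum_congr rfl fun j _ => by ring
  · rw [Polynomial.coeff_eq_zero_of_natDegree_lt (by omega), Nat.choose_eq_zero_of_lt (by omega)]
    simp

lemma eval_lin (a b : ℝ) (v : Fin 2 → ℝ) : eval v (lin a b) = a * v 0 + b * v 1 := by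
  simp [lin]

lemma lin_ne_zero (a b : ℝ) (h : (a, b) ≠ (0, 0)) : lin a b ≠ 0 := by
  intro h0
  have h1 := eval_lin a b ![a, b]
  rw [h0] at h1
  simp at h1
  apply h
  have ha : a = 0 := by nlinarith [mul_self_nonneg a, mul_self_nonneg b]
  have hb : b = 0 := by nlinarith [mul_self_nonneg a, mul_self_nonneg b]
  rw [ha, hb]

lemma has_decomp (d : ℕ) (hd : 1 ≤ d) (f : MvPolynomial (Fin 2) ℝ)
    (hsplit : SplitsDistinct f d) : HasDecomp f d d := by
  obtain ⟨a, b, hne, hab, rfl⟩ := hsplit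
  rcases hd.eq_or_lt with rfl | hd
  · exact ⟨fun _ => 1, a, b, hne, by simp⟩
  obtain ⟨s, t, hs, ht⟩ := sign_change hd a b hab
  set P : Polynomial ℝ := ∏ j, (Polynomial.C (a j) * Polynomial.X + Polynomial.C (b j)) with hP
  have hev : ∀ u, P.eval u = ∏ j, (a j * u + b j) := by
    intro u; simp [hP, Polynomial.eval_prod]
  have hdeg : P.natDegree ≤ d := by
    refine (Polynomial.natDegree_prod_le _ _).trans ?_
    refine (Finset.sum_le_sum (fun j _ => Polynomial.natDegree_linear_le)).trans ?_
    simp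
  obtain ⟨c, τ, h⟩ := upper P hdeg s t (by rwa [hev]) (by rwa [hev])
  refine ⟨c, fun _ => 1, τ, by simp, ?_⟩
  have hfun : ∀ x, (fun y => ∏ j, (a j * x + b j * y)) = fun y => ∑ j, c j * (1 * x + τ j * y) ^ d := by
    intro x
    refine Continuous.ext_on (s := {(0:ℝ)}ᶜ) (dense_compl_singleton 0) (by fun_prop) (by fun_prop) ?_
    intro y hy
    have hy : y ≠ 0 := by simpa using hy
    have h1 := congrArg (fun p => y ^ d * Polynomial.eval (x / y) p) h
    simp only [hev] at h1
    simp only [Polynomial.eval_finsetSum, Polynomial.eval_mul, Polynomial.eval_C, Polynomial.eval_pow,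
      Polynomial.eval_add, Polynomial.eval_X, Finset.mul_sum] at h1
    have h2 : y ^ d * ∏ j, (a j * (x/y) + b j) = ∏ j, (a j * x + b j * y) := by
      have : y ^ d = ∏ _j : Fin d, y := by simp
      rw [this, ← Finset.prod_mul_distrib]
      refine Finset.prod_congr rfl fun j _ => ?_
      field_simp
    rw [h2] at h1
    simp only
    rw [h1]
    refine Finset.sum_congr rfl fun j _ => ?_
    rw [mul_left_comm, ← mul_pow]; congr 2; field_simp
  apply MvPolynomial.funext
  intro v
  have := congrFun (hfun (v 0)) (v 1)
  simpa [eval_prod, eval_lin] using this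

lemma lower_bound (d : ℕ) (f : MvPolynomial (Fin 2) ℝ)
    (hsplit : SplitsDistinct f d) (r : ℕ) (hr : HasDecomp f d r) : d ≤ r := by
  classical
  by_contra hlt
  push Not at hlt
  obtain ⟨a, b, hne, hab, hf⟩ := hsplit
  obtain ⟨c, a', b', -, hf'⟩ := hr
  have hpw : ∀ x y, eval ![x, y] f = pw d c a' b' x y := by
    intro x y
    rw [hf']; simp [pw, eval_lin]
  have hinj : Function.Injective (fun j => (b j, - a j)) := by
    intro i j hij
    by_contra hn
    apply hab i j hn
    simp only [Prod.mk.injEq, neg_inj] at hij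
    rw [hij.1, hij.2]
  have h0 := key r d hlt c a' b' (Finset.univ.image (fun j => (b j, - a j)))
    (by rw [Finset.card_image_of_injective _ hinj]; simp)
    (by
      intro z h1 w h2 hn
      obtain ⟨i, -, rfl⟩ := Finset.mem_image.1 h1
      obtain ⟨j, -, rfl⟩ := Finset.mem_image.1 h2
      intro h
      apply hab i j (fun h => hn (by rw [h]))
      simp only at h
      linarith)
    (by
      intro z h1
      obtain ⟨i, -, rfl⟩ := Finset.mem_image.1 h1
      rw [← hpw, hf, eval_prod]
      refine Finset.prod_eq_zero (Finset.mem_univ i) ?_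
      rw [eval_lin]
      simp
      ring)
  have hf0 : f = 0 := by
    apply MvPolynomial.funext
    intro v
    have : v = ![v 0, v 1] := by ext i; fin_cases i <;> rfl
    rw [this, hpw, h0]; simp
  rw [hf] at hf0
  exact Finset.prod_ne_zero_iff.2 (fun j _ => lin_ne_zero _ _ (hne j)) hf0

/-- a real binary form of degree `d ≥ 1` which is a product of `d`
pairwise non-proportional real linear forms has real rank exactly `d`. -/
theorem stmt4 (d : ℕ) (hd : 1 ≤ d) (f : MvPolynomial (Fin 2) ℝ)
    (hsplit : SplitsDistinct f d) :
    realRank f d = d := by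
  apply le_antisymm
  · exact Nat.sInf_le (has_decomp d hd f hsplit)
  · exact le_csInf ⟨d, has_decomp d hd f hsplit⟩ (fun r hr => lower_bound d f hsplit r hr)
end
end

section
/- Canonical forms for real binary quartics: let f be a real binary quartic with distinct roots (squarefree over ℂ). (1) If f has no real root, there exist A ∈ GL₂(ℝ), λ ∈ ℝ \ {0} and a > 0 such that λ·f(A(x,y)) = (x²+y²)(x²+ay²). (2) If f has exactly two distinct real roots, there exist A ∈ GL₂(ℝ), λ ≠ 0 and a < 0 such that λ·f(A(x,y)) = (x²+y²)(x²+ay²). (3) If f has four distinct real roots, there exist A ∈ GL₂(ℝ), λ ≠ 0 and a < 0 such that λ·f(A(x,y)) = (x²−y²)(x²+ay²). -/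
open MvPolynomial

noncomputable section

def FF (c : Fin 5 → ℝ) (x y : ℝ) : ℝ :=
  c 4 * x^4 + c 3 * x^3*y + c 2 * x^2*y^2 + c 1 * x*y^3 + c 0 * y^4

def Good (F : ℝ → ℝ → ℝ) : Prop := ∀ a b c0 c1 c2 : ℝ, (a ≠ 0 ∨ b ≠ 0) →
  ¬ ∀ x y, F x y = (a*x+b*y)^2*(c0*x^2+c1*x*y+c2*y^2)

def RR (F G : ℝ → ℝ → ℝ) : Prop := ∃ p q r s : ℝ, p*s-q*r ≠ 0 ∧
  ∀ x y, F (p*x+q*y) (r*x+s*y) = G x y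

lemma RR.trans' {F G H} (h1 : RR F G) (h2 : RR G H) : RR F H := by
  obtain ⟨p,q,r,s,hd,h⟩ := h1
  obtain ⟨p',q',r',s',hd',h'⟩ := h2
  refine ⟨p*p'+q*r', p*q'+q*s', r*p'+s*r', r*q'+s*s', ?_, fun x y => ?_⟩
  · have : (p*p'+q*r')*(r*q'+s*s') - (p*q'+q*s')*(r*p'+s*r') = (p*s-q*r)*(p'*s'-q'*r') := by ring
    rw [this]; exact mul_ne_zero hd hd'
  · rw [← h', ← h]; congr 1 <;> ring

lemma Good.of_RR {F G} (hF : Good F) (h : RR F G) : Good G := by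
  obtain ⟨p,q,r,s,hd,h⟩ := h
  intro a b c0 c1 c2 hab hG
  set D := p*s-q*r with hD
  -- inverse: x = (s u - q v)/D, y = (-r u + p v)/D
  refine hF ((a*s-b*r)/D) ((b*p-a*q)/D)
    ((c0*s^2-c1*s*r+c2*r^2)/D^2) ((-2*c0*s*q+c1*(s*p+q*r)-2*c2*r*p)/D^2)
    ((c0*q^2-c1*q*p+c2*p^2)/D^2) ?_ ?_
  · by_contra hcon
    push Not at hcon
    obtain ⟨e1, e2⟩ := hcon
    rw [div_eq_zero_iff] at e1 e2
    have e1 := e1.resolve_right hd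
    have e2 := e2.resolve_right hd
    have ha : a * D = 0 := by rw [hD]; linear_combination p*e1 + r*e2
    have hb : b * D = 0 := by rw [hD]; linear_combination q*e1 + s*e2
    rcases hab with h | h
    · exact h ((mul_eq_zero.1 ha).resolve_right hd)
    · exact h ((mul_eq_zero.1 hb).resolve_right hd)
  · intro u v
    have h1 := h ((s*u-q*v)/D) ((-r*u+p*v)/D)
    have e1 : p*((s*u-q*v)/D)+q*((-r*u+p*v)/D) = u := by
      field_simp; rw [hD]; ring
    have e2 : r*((s*u-q*v)/D)+s*((-r*u+p*v)/D) = v := by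
      field_simp; rw [hD]; ring
    rw [e1, e2, hG] at h1
    rw [h1]; field_simp; ring

def Canon (F : ℝ → ℝ → ℝ) : Prop := ∃ p q r s lam a : ℝ, p*s-q*r ≠ 0 ∧ lam ≠ 0 ∧
  ((0 < a ∧ ∀ x y, lam * F (p*x+q*y) (r*x+s*y) = (x^2+y^2)*(x^2+a*y^2)) ∨
   (a < 0 ∧ ∀ x y, lam * F (p*x+q*y) (r*x+s*y) = (x^2+y^2)*(x^2+a*y^2)) ∨
   (a < 0 ∧ a ≠ -1 ∧ ∀ x y, lam * F (p*x+q*y) (r*x+s*y) = (x^2-y^2)*(x^2+a*y^2)))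

lemma Canon.of_RR {F G} (h : RR F G) (hG : Canon G) : Canon F := by
  obtain ⟨p,q,r,s,hd,h⟩ := h
  obtain ⟨p',q',r',s',lam,a,hd',hl,h'⟩ := hG
  refine ⟨p*p'+q*r', p*q'+q*s', r*p'+s*r', r*q'+s*s', lam, a, ?_, hl, ?_⟩
  · have : (p*p'+q*r')*(r*q'+s*s') - (p*q'+q*s')*(r*p'+s*r') = (p*s-q*r)*(p'*s'-q'*r') := by ring
    rw [this]; exact mul_ne_zero hd hd'
  · have e : ∀ x y, F ((p*p'+q*r')*x+(p*q'+q*s')*y) ((r*p'+s*r')*x+(r*q'+s*s')*y)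
        = G (p'*x+q'*y) (r'*x+s'*y) := by
      intro x y; rw [← h]; congr 1 <;> ring
    simpa only [e] using h'

lemma quad_root (A B C : ℝ) (hA : A ≠ 0 ∨ B ≠ 0 ∨ C = 0) (h : 0 ≤ B^2-4*A*C) : ∃ k, A*k^2+B*k+C = 0 := by
  by_cases h0 : A = 0
  · by_cases h1 : B = 0
    · exact ⟨0, by simp_all⟩
    · exact ⟨-C/B, by subst h0; field_simp; ring⟩
  · refine ⟨(-B+√(B^2-4*A*C))/(2*A), ?_⟩
    have := Real.sq_sqrt h
    generalize √(B^2-4*A*C) = w at this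
    field_simp
    linear_combination this

lemma canon_ell0 {F : ℝ → ℝ → ℝ} (hF : Good F) (α β : ℝ) (c : ℝ) (hc : c ≠ 0)
    (h : ∀ x y, F x y = c*(x^2+y^2)*(α*x^2+β*y^2)) : Canon F := by
  have hα : α ≠ 0 := by
    rintro rfl
    exact hF 0 1 (c*β) 0 (c*β) (by simp) (fun x y => by rw [h]; ring)
  have hβ : β ≠ 0 := by
    rintro rfl
    exact hF 1 0 (c*α) 0 (c*α) (by simp) (fun x y => by rw [h]; ring)
  refine ⟨1,0,0,1,1/(c*α),β/α, by norm_num, by positivity, ?_⟩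
  have e : ∀ x y, 1/(c*α) * F (1*x+0*y) (0*x+1*y) = (x^2+y^2)*(x^2+β/α*y^2) := by
    intro x y; rw [h]; field_simp; ring
  rcases lt_or_gt_of_ne (div_ne_zero hβ hα) with h1 | h1
  · exact Or.inr (Or.inl ⟨h1, e⟩)
  · exact Or.inl ⟨h1, e⟩

lemma canon_ell {F : ℝ → ℝ → ℝ} (hF : Good F) (m n a b c : ℝ) (hn : n ≠ 0)
    (h : ∀ x y, F x y = (x^2-2*m*x*y+(m^2+n^2)*y^2)*(a*x^2+b*x*y+c*y^2)) : Canon F := by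
  obtain ⟨α, β, γ, h1⟩ : ∃ α β γ, RR F (fun x y => (x^2+y^2)*(α*x^2+2*β*x*y+γ*y^2)) := by
    refine ⟨a, (2*a*(m/n)+b/n)/2, a*(m/n)^2+b*(m/n)/n+c/n^2, 1, m/n, 0, 1/n, by simpa using hn, fun x y => ?_⟩
    rw [h]; field_simp; ring
  obtain ⟨k, hk⟩ := quad_root β (α-γ) (-β) (by by_cases h : β = 0 <;> simp [h]) (by nlinarith [sq_nonneg (α-γ), sq_nonneg β])
  have h2 : RR (fun x y => (x^2+y^2)*(α*x^2+2*β*x*y+γ*y^2))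
      (fun x y => (1+k^2)*(x^2+y^2)*((α+2*β*k+γ*k^2)*x^2+(α*k^2-2*β*k+γ)*y^2)) := by
    refine ⟨1,-k,k,1, by nlinarith [sq_nonneg k], fun x y => ?_⟩
    simp only []
    linear_combination (-2*(1+k^2)*(x^2+y^2)*x*y)*hk
  have h3 := h1.trans' h2
  exact Canon.of_RR h3 (canon_ell0 (hF.of_RR h3) _ _ (1+k^2) (by positivity) (fun x y => rfl))

lemma canon_hyp0 {F : ℝ → ℝ → ℝ} (hF : Good F) (α β : ℝ) (c : ℝ) (hc : c ≠ 0) (hab : α*β<0)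
    (h : ∀ x y, F x y = c*(x^2-y^2)*(α*x^2+β*y^2)) : Canon F := by
  have hα : α ≠ 0 := by
    rintro rfl; simp at hab
  have h1 : β/α < 0 := by
    have : β/α = α*β/α^2 := by field_simp
    rw [this]; exact div_neg_of_neg_of_pos hab (by positivity)
  refine ⟨1,0,0,1,1/(c*α),β/α, by norm_num, by positivity, Or.inr (Or.inr ⟨h1, ?_, ?_⟩)⟩
  · intro h2
    have h2 : β = -α := by field_simp at h2; linarith
    exact hF 1 1 (c*α) (-2*c*α) (c*α) (by simp) (fun x y => by rw [h, h2]; ring)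
  · intro x y; rw [h]; field_simp; ring

lemma canon_hyp1 {F : ℝ → ℝ → ℝ} (hF : Good F) (c e g : ℝ) (hc : c ≠ 0) (heg : e ≠ g)
    (hpos : 0 < (1-e^2)*(1-g^2))
    (h : ∀ x y, F x y = c*(x^2-y^2)*((x+e*y)*(x+g*y))) : Canon F := by
  have hd : (0:ℝ) < (1+e*g)^2-(e+g)^2 := by nlinarith
  obtain ⟨k, hk⟩ := quad_root (e+g) (2*(1+e*g)) (e+g) (by
      by_cases h : e+g = 0
      · exact Or.inr (Or.inr h)
      · exact Or.inl h) (by nlinarith)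
  have hk1 : 1-k^2 ≠ 0 := by
    intro h1
    have : (k-1)*(k+1) = 0 := by linarith
    rcases mul_eq_zero.1 this with h2 | h2
    · obtain rfl : k = 1 := by linarith
      have : 1+e*g = -(e+g) := by linarith
      rw [this] at hd; linarith
    · obtain rfl : k = -1 := by linarith
      have : 1+e*g = (e+g) := by linarith
      rw [this] at hd; linarith
  have h2 : RR F
      (fun x y => (c*(1-k^2))*(x^2-y^2)*(((1+e*k)*(1+g*k))*x^2+((k+e)*(k+g))*y^2)) := by
    refine ⟨1,k,k,1, by convert hk1 using 1; ring, fun x y => ?_⟩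
    simp only [h]
    linear_combination (c*(1-k^2)*(x^2-y^2)*x*y)*hk
  refine Canon.of_RR h2 (canon_hyp0 (hF.of_RR h2) _ _ _ (mul_ne_zero hc hk1) ?_ (fun x y => rfl))
  have e1 : (1+e*k)*(1+g*k)*((k+e)*(k+g)) = -((1-k^2)*(e-g)/2)^2 := by
    linear_combination (((e+g)*k^2+(2*(1+e*g))*k+(e+g))/4)*hk
  rw [e1]
  have : (1-k^2)*(e-g)/2 ≠ 0 := by
    have := sub_ne_zero.2 heg
    positivity
  have : 0 < ((1-k^2)*(e-g)/2)^2 := by positivity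
  linarith

lemma canon_hyp2 {F : ℝ → ℝ → ℝ} (hF : Good F) (c r1 r2 r3 r4 : ℝ) (hc : c ≠ 0)
    (h12 : r1 ≠ r2) (h34 : r3 ≠ r4)
    (hpos : 0 < (r1-r3)*(r1-r4)*(r2-r3)*(r2-r4))
    (h : ∀ x y, F x y = c*((x-r1*y)*(x-r2*y)*(x-r3*y)*(x-r4*y))) : Canon F := by
  have hd := sub_ne_zero.2 h12
  have h2 : RR F (fun x y => c*(x^2-y^2)*((x+(-1+2*(r1-r3)/(r1-r2))*y)*(x+(-1+2*(r1-r4)/(r1-r2))*y))) := by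
    refine ⟨1, 2*r1/(r1-r2)-1, 0, 2/(r1-r2), ?_, fun x y => ?_⟩
    · simpa using hd
    · rw [h]; field_simp; ring
  refine Canon.of_RR h2 (canon_hyp1 (hF.of_RR h2) _ _ _ hc ?_ ?_ (fun x y => rfl))
  · intro h; field_simp at h; apply h34; linarith
  · have : (1-(-1+2*(r1-r3)/(r1-r2))^2)*(1-(-1+2*(r1-r4)/(r1-r2))^2)
      = 16*((r1-r3)*(r1-r4)*(r2-r3)*(r2-r4))/(r1-r2)^4 := by field_simp; ring
    rw [this]; positivity

lemma canon_hyp {F : ℝ → ℝ → ℝ} (hF : Good F) (c a b d e : ℝ) (hc : c ≠ 0)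
    (h : ∀ x y, F x y = c*((x-a*y)*(x-b*y)*(x-d*y)*(x-e*y))) : Canon F := by
  have key : ∀ a b d e : ℝ, (∀ x y, F x y = c*((x-a*y)*(x-b*y)*(x-d*y)*(x-e*y))) → a ≠ b := by
    rintro a _ d e h rfl
    exact hF 1 (-a) c (-c*(d+e)) (c*d*e) (by simp) (fun x y => by rw [h]; ring)
  have hab := key a b d e h
  have had := key a d b e (fun x y => by rw [h]; ring)
  have hae := key a e b d (fun x y => by rw [h]; ring)
  have hbd := key b d a e (fun x y => by rw [h]; ring)
  have hbe := key b e a d (fun x y => by rw [h]; ring)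
  have hde := key d e a b (fun x y => by rw [h]; ring)
  by_cases h1 : 0 < (a-d)*(a-e)*(b-d)*(b-e)
  · exact canon_hyp2 hF c a b d e hc hab hde h1 h
  by_cases h2 : 0 < (a-b)*(a-e)*(d-b)*(d-e)
  · exact canon_hyp2 hF c a d b e hc had hbe h2 (fun x y => by rw [h]; ring)
  by_cases h3 : 0 < (a-b)*(a-d)*(e-b)*(e-d)
  · exact canon_hyp2 hF c a e b d hc hae hbd h3 (fun x y => by rw [h]; ring)
  exfalso
  push Not at h1 h2 h3
  have hu : 0 < ((a-b)*(d-e))^2 := by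
    have := sub_ne_zero.2 hab; have := sub_ne_zero.2 hde; positivity
  nlinarith [sq_nonneg ((b-d)*(a-e)), sq_nonneg ((d-a)*(b-e))]

lemma FF_ext (c d : Fin 5 → ℝ) (h : ∀ t, FF c t 1 = FF d t 1) : ∀ x y, FF c x y = FF d x y := by
  have h0 := h 0
  have h1 := h 1
  have h2 := h (-1)
  have h3 := h 2
  have h4 := h (-2)
  simp only [FF] at *
  intro x y
  have e0 : c 0 = d 0 := by linarith
  have e1 : c 1 = d 1 := by linarith
  have e2 : c 2 = d 2 := by linarith
  have e3 : c 3 = d 3 := by linarith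
  have e4 : c 4 = d 4 := by linarith
  rw [e0,e1,e2,e3,e4]

open Polynomial in
lemma canon_FF1 (c : Fin 5 → ℝ) (hF : Good (FF c)) (h4 : c 4 ≠ 0) : Canon (FF c) := by
  set P : ℝ[X] := Polynomial.C (c 4) * Polynomial.X^4 + Polynomial.C (c 3) * Polynomial.X^3
    + Polynomial.C (c 2) * Polynomial.X^2 + Polynomial.C (c 1) * Polynomial.X + Polynomial.C (c 0) with hP
  have hdeg : P.natDegree = 4 := by rw [hP]; compute_degree!
  have hev : ∀ t, P.eval t = FF c t 1 := by intro t; simp [hP, FF]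
  have hP0 : P ≠ 0 := by intro h; rw [h] at hdeg; simp at hdeg
  by_cases hz : ∃ z : ℂ, Polynomial.aeval z P = 0 ∧ z.im ≠ 0
  · obtain ⟨z, hz, him⟩ := hz
    obtain ⟨Q, hQ⟩ := P.quadratic_dvd_of_aeval_eq_zero_im_ne_zero hz him
    have hQ0 : Q ≠ 0 := by rintro rfl; simp at hQ; exact hP0 hQ
    have hq : (Polynomial.X ^ 2 - Polynomial.C (2 * z.re) * Polynomial.X + Polynomial.C (‖z‖ ^ 2) : ℝ[X]).natDegree = 2 := by
      compute_degree!
    have hq0 : (Polynomial.X ^ 2 - Polynomial.C (2 * z.re) * Polynomial.X + Polynomial.C (‖z‖ ^ 2) : ℝ[X]) ≠ 0 := by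
      intro h; rw [h] at hq; simp at hq
    have hQd : Q.natDegree = 2 := by
      have := congrArg Polynomial.natDegree hQ
      rw [Polynomial.natDegree_mul hq0 hQ0, hdeg, hq] at this
      omega
    have hQe : ∀ t, Q.eval t = Q.coeff 2 * t^2 + Q.coeff 1 * t + Q.coeff 0 := by
      intro t
      rw [Polynomial.eval_eq_sum_range, hQd]; simp [Finset.sum_range_succ]; ring
    have hn : ‖z‖^2 = z.re^2+z.im^2 := by
      rw [← Complex.normSq_eq_norm_sq, Complex.normSq_apply]; ring
    refine canon_ell hF z.re z.im (Q.coeff 2) (Q.coeff 1) (Q.coeff 0) him ?_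
    set a := Q.coeff 2
    set b := Q.coeff 1
    set d := Q.coeff 0
    set m := z.re
    set n := z.im
    have := FF_ext c ![(m^2+n^2)*d, (m^2+n^2)*b-2*m*d, (m^2+n^2)*a-2*m*b+d, b-2*m*a, a] (fun t => by
      rw [← hev, hQ]
      simp only [Polynomial.eval_mul, hQe, Polynomial.eval_add, Polynomial.eval_sub, Polynomial.eval_pow, Polynomial.eval_C, Polynomial.eval_X, hn]
      simp [FF]; ring)
    intro x y
    rw [this]; simp [FF]; ring
  · push Not at hz
    have hs := IsAlgClosed.splits (P.map (algebraMap ℝ ℂ))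
    have hm := hs.eq_prod_roots
    have hcard := hs.natDegree_eq_card_roots
    rw [Polynomial.natDegree_map, hdeg] at hcard
    have hreal : ∀ z ∈ (P.map (algebraMap ℝ ℂ)).roots, z.im = 0 := by
      intro z hz'
      apply hz
      have := Polynomial.isRoot_of_mem_roots hz'
      rwa [Polynomial.IsRoot, Polynomial.eval_map_algebraMap] at this
    obtain ⟨z1, z2, z3, z4, hzz⟩ : ∃ z1 z2 z3 z4, (P.map (algebraMap ℝ ℂ)).roots = {z1,z2,z3,z4} := by
      generalize (P.map (algebraMap ℝ ℂ)).roots = S at hcard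
      have hne : S ≠ 0 := by rintro rfl; simp at hcard
      obtain ⟨z1, hz1⟩ := Multiset.exists_mem_of_ne_zero hne
      obtain ⟨s, rfl⟩ := Multiset.exists_cons_of_mem hz1
      have h3 : Multiset.card s = 3 := by simpa using hcard.symm
      obtain ⟨z2, z3, z4, rfl⟩ := Multiset.card_eq_three.1 h3
      exact ⟨z1, z2, z3, z4, rfl⟩
    rw [hzz] at hm hreal
    have r1 : z1 = (z1.re : ℂ) := by apply Complex.ext; simp; simpa using hreal z1 (by simp)
    have r2 : z2 = (z2.re : ℂ) := by apply Complex.ext; simp; simpa using hreal z2 (by simp)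
    have r3 : z3 = (z3.re : ℂ) := by apply Complex.ext; simp; simpa using hreal z3 (by simp)
    have r4 : z4 = (z4.re : ℂ) := by apply Complex.ext; simp; simpa using hreal z4 (by simp)
    have hlead : P.leadingCoeff = c 4 := by
      rw [Polynomial.leadingCoeff, hdeg, hP]; simp [Polynomial.coeff_C]
    rw [r1,r2,r3,r4] at hm
    generalize z1.re = a at hm
    generalize z2.re = b at hm
    generalize z3.re = d at hm
    generalize z4.re = e at hm
    have hpt : ∀ t : ℝ, P.eval t = c 4 * ((t-a)*(t-b)*(t-d)*(t-e)) := by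
      intro t
      have := congrArg (Polynomial.eval (t:ℂ)) hm
      rw [Polynomial.leadingCoeff_map, hlead] at this
      simp only [Multiset.insert_eq_cons, Multiset.map_cons, Multiset.map_singleton, Multiset.prod_cons, Multiset.prod_singleton, Polynomial.eval_mul, Polynomial.eval_sub, Polynomial.eval_C, Polynomial.eval_X] at this
      rw [Polynomial.eval_map_algebraMap, ← Complex.coe_algebraMap, Polynomial.aeval_algebraMap_apply] at this
      simp only [Complex.coe_algebraMap, Polynomial.coe_aeval_eq_eval] at this
      rw [mul_assoc, mul_assoc]
      exact_mod_cast this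
    refine canon_hyp hF (c 4) a b d e h4 ?_
    have := FF_ext c ![c 4*(a*b*d*e), -c 4*(a*b*d+a*b*e+a*d*e+b*d*e), c 4*(a*b+a*d+a*e+b*d+b*e+d*e), -c 4*(a+b+d+e), c 4] (fun t => by
      rw [← hev, hpt]
      simp [FF]; ring)
    intro x y
    rw [this]; simp [FF]; ring

lemma canon_FF (c : Fin 5 → ℝ) (hF : Good (FF c)) : Canon (FF c) := by
  obtain ⟨u, v, huv⟩ : ∃ u v, FF c u v ≠ 0 := by
    by_contra hcon
    push Not at hcon
    exact hF 1 0 0 0 0 (by simp) (fun x y => by rw [hcon]; ring)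
  have hd : u*u+v*v ≠ 0 := by
    intro h
    have h1 : u = 0 := by nlinarith [sq_nonneg u, sq_nonneg v]
    have h2 : v = 0 := by nlinarith [sq_nonneg u, sq_nonneg v]
    apply huv; simp [FF, h1, h2]
  obtain ⟨d, hR, hd4⟩ : ∃ d : Fin 5 → ℝ, RR (FF c) (FF d) ∧ d 4 = FF c u v := by
    refine ⟨![FF c (-v) u,
      c 4*(4*u*(-v)^3)+c 3*(3*u*(-v)^2*u+(-v)^3*v)+c 2*(2*u*(-v)*u^2+2*(-v)^2*u*v)+c 1*(u*u^3+3*(-v)*u^2*v)+c 0*(4*u^3*v),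
      c 4*(6*u^2*v^2)+c 3*(3*u^2*(-v)*u+3*u*(-v)^2*v)+c 2*(u^2*u^2+4*u*(-v)*u*v+v^2*v^2)+c 1*(3*u*u^2*v+3*(-v)*u*v^2)+c 0*(6*u^2*v^2),
      c 4*(4*u^3*(-v))+c 3*(u^3*u+3*u^2*(-v)*v)+c 2*(2*u^2*u*v+2*u*(-v)*v^2)+c 1*(3*u*u*v^2+(-v)*v^3)+c 0*(4*u*v^3),
      FF c u v], ⟨u,-v,v,u, by convert hd using 1; ring, fun x y => ?_⟩, by simp⟩
    simp [FF]; ring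
  exact Canon.of_RR hR (canon_FF1 d (hF.of_RR hR) (hd4 ▸ huv))

lemma eval_FF (f : MvPolynomial (Fin 2) ℝ) (hf : f.IsHomogeneous 4) :
    ∃ c : Fin 5 → ℝ, ∀ v : Fin 2 → ℝ, eval v f = FF c (v 0) (v 1) := by
  classical
  let e : ℕ → (Fin 2 →₀ ℕ) := fun k => Finsupp.single 0 k + Finsupp.single 1 (4-k)
  have he0 : ∀ k, e k 0 = k := by intro k; simp [e]
  have he1 : ∀ k, e k 1 = 4-k := by intro k; simp [e]
  have hinj : Function.Injective e := by
    intro a b h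
    rw [← he0 a, h, he0]
  refine ⟨fun k => coeff (e k) f, fun v => ?_⟩
  rw [eval_eq']
  rw [Finset.sum_subset (s₂ := (Finset.range 5).image e)]
  · rw [Finset.sum_image (fun a _ b _ h => hinj h)]
    simp only [Fin.prod_univ_two, he0, he1, Finset.sum_range_succ, Finset.sum_range_zero]
    simp [FF]; ring
  · intro d hd
    have h1 := hf (mem_support_iff.1 hd)
    have h2 : d 0 + d 1 = 4 := by
      rw [Finsupp.weight_apply, Finsupp.sum_fintype _ _ (by simp)] at h1
      simpa [Fin.sum_univ_two] using h1
    refine Finset.mem_image.2 ⟨d 0, by simp; omega, ?_⟩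
    ext i
    fin_cases i
    · simp [he0]
    · simp [he1]; omega
  · intro d _ hd
    rw [notMem_support_iff.1 hd, zero_mul]

lemma good_of_sf (f : MvPolynomial (Fin 2) ℝ) (hsf : SquarefreeC f) (c : Fin 5 → ℝ)
    (hc : ∀ v : Fin 2 → ℝ, eval v f = FF c (v 0) (v 1)) : Good (FF c) := by
  intro a b c0 c1 c2 hab h
  have hfe : f = lin a b * lin a b * (C c0 * X 0^2 + C c1 * X 0 * X 1 + C c2 * X 1^2) := by
    apply MvPolynomial.funext
    intro v
    rw [hc, h]; simp only [lin, map_add, map_mul, map_pow, eval_C, eval_X]; ring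
  have hu := hsf (MvPolynomial.map (algebraMap ℝ ℂ) (lin a b)) (by
    rw [hfe, map_mul, map_mul]; exact dvd_mul_right _ _)
  -- evaluate at the root
  have hu2 := hu.map (eval (![(-b : ℂ), (a:ℂ)]))
  simp [lin] at hu2
  apply hu2
  ring

lemma count (f : MvPolynomial (Fin 2) ℝ) (c : Fin 5 → ℝ)
    (hc : ∀ v : Fin 2 → ℝ, eval v f = FF c (v 0) (v 1)) (g : ℝ → ℝ → ℝ) (p q r s lam : ℝ)
    (hd : p*s-q*r ≠ 0) (hl : lam ≠ 0)
    (h : ∀ x y, lam * FF c (p*x+q*y) (r*x+s*y) = g x y) (h0 : g 1 0 ≠ 0) :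
    (projRoots f).ncard = {t | g t 1 = 0}.ncard := by
  have hne : ∀ t : ℝ, ![p*t+q, r*t+s] ≠ 0 := by
    intro t ht
    have e0 := congrFun ht 0
    have e1 := congrFun ht 1
    simp at e0 e1
    apply hd
    by_cases hp : p = 0
    · by_cases hr : r = 0
      · simp [hp, hr]
      · subst hp
        have : q = 0 := by linarith
        rw [this]; ring
    · have : p*(p*s-q*r) = 0 := by linear_combination p*p*e1 - p*r*e0
      exact (mul_eq_zero.1 this).resolve_left hp
  have hhom : ∀ k x y, FF c (k*x) (k*y) = k^4 * FF c x y := by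
    intro k x y; simp [FF]; ring
  have hmem : ∀ v hv, Projectivization.mk ℝ v hv ∈ projRoots f ↔ FF c (v 0) (v 1) = 0 := by
    intro v hv
    obtain ⟨k, hk⟩ := Projectivization.exists_smul_eq_mk_rep ℝ v hv
    change eval _ f = 0 ↔ _
    rw [← hk, hc]
    have : FF c ((k • v) 0) ((k • v) 1) = (k:ℝ)^4 * FF c (v 0) (v 1) := by
      rw [← hhom]; rfl
    rw [this]
    simp
  have himg : projRoots f = (fun t => Projectivization.mk ℝ _ (hne t)) '' {t | g t 1 = 0} := by
    ext P
    induction P using Projectivization.ind with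
    | h v hv =>
    rw [hmem]
    constructor
    · intro hz
      set D := p*s-q*r with hD
      set x := (s*v 0 - q*v 1)/D with hx
      set y := (-r*v 0+p*v 1)/D with hy
      have e1 : p*x+q*y = v 0 := by
        rw [hx, hy]; field_simp; rw [hD]; ring
      have e2 : r*x+s*y = v 1 := by
        rw [hx, hy]; field_simp; rw [hD]; ring
      have hy0 : y ≠ 0 := by
        intro hy0
        have hx0 : x ≠ 0 := by
          intro hx0
          apply hv
          ext i; fin_cases i
          · simp [← e1, hx0, hy0]
          · simp [← e2, hx0, hy0]
        apply h0
        rw [← h]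
        have := hhom x p r
        rw [hy0] at e1 e2
        rw [show x*p = v 0 by linarith, show x*r = v 1 by linarith, hz] at this
        have : FF c p r = 0 := by
          rcases mul_eq_zero.1 this.symm with h | h
          · exact absurd h (pow_ne_zero _ hx0)
          · exact h
        simp [this]
      refine ⟨x/y, ?_, ?_⟩
      · change g (x/y) 1 = 0
        rw [← h]
        have := hhom y (p*(x/y)+q*1) (r*(x/y)+s*1)
        rw [show y*(p*(x/y)+q*1) = v 0 by rw [← e1]; field_simp,
          show y*(r*(x/y)+s*1) = v 1 by rw [← e2]; field_simp, hz] at this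
        rcases mul_eq_zero.1 this.symm with h | h
        · exact absurd h (pow_ne_zero _ hy0)
        · rw [h, mul_zero]
      · rw [Projectivization.mk_eq_mk_iff']
        refine ⟨1/y, ?_⟩
        ext i; fin_cases i
        · simp [← e1]; field_simp
        · simp [← e2]; field_simp
    · rintro ⟨t, ht, hEq⟩
      rw [← hmem v hv, ← hEq, hmem]
      have := h t 1
      have ht2 : g t 1 = 0 := ht
      rw [ht2] at this
      simpa [hl] using this
  rw [himg]
  apply Set.ncard_image_of_injective
  intro t u htu
  simp only at htu
  rw [Projectivization.mk_eq_mk_iff'] at htu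
  obtain ⟨k, hk⟩ := htu
  have e0 := congrFun hk 0
  have e1 := congrFun hk 1
  simp at e0 e1
  have : (p*s-q*r)*(t-u) = 0 := by
    linear_combination (-(r*u+s))*e0 + (p*u+q)*e1
  exact sub_eq_zero.1 ((mul_eq_zero.1 this).resolve_left hd)

lemma finish (f : MvPolynomial (Fin 2) ℝ) (c : Fin 5 → ℝ)
    (hc : ∀ v : Fin 2 → ℝ, eval v f = FF c (v 0) (v 1)) (p q r s lam : ℝ)
    (g : MvPolynomial (Fin 2) ℝ)
    (h : ∀ x y, lam * FF c (p*x+q*y) (r*x+s*y) = eval ![x,y] g) :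
    C lam * subst !![p,q;r,s] f = g := by
  apply MvPolynomial.funext
  intro v
  have hv : v = ![v 0, v 1] := by ext i; fin_cases i <;> rfl
  have h1 : eval v (subst !![p,q;r,s] f) = FF c (p*v 0+q*v 1) (r*v 0+s*v 1) := by
    have := hc ![p*v 0+q*v 1, r*v 0+s*v 1]
    simp only [Matrix.cons_val_zero, Matrix.cons_val_one] at this
    rw [← this, subst, aeval_def, ← MvPolynomial.coe_eval₂Hom, ← RingHom.comp_apply]
    congr 1
    apply MvPolynomial.ringHom_ext
    · intro z; simp
    · intro i; fin_cases i <;> simp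
  rw [map_mul, h1, eval_C, h, ← hv]

lemma sq_cases (a : ℝ) (ha : a < 0) : ∃ w, 0 < w ∧ a = -w^2 :=
  ⟨√(-a), Real.sqrt_pos.2 (by linarith), by rw [Real.sq_sqrt (by linarith)]; ring⟩

/-- canonical forms for real binary quartics with distinct roots,
according to the number of distinct real roots (0, 2, or 4). -/
theorem stmt6 (f : MvPolynomial (Fin 2) ℝ) (hf : f.IsHomogeneous 4)
    (hsf : SquarefreeC f) :
    ((projRoots f).ncard = 0 →
      ∃ (A : Matrix (Fin 2) (Fin 2) ℝ) (lam a : ℝ), IsUnit A.det ∧ lam ≠ 0 ∧ 0 < a ∧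
        C lam * subst A f = (X 0 ^ 2 + X 1 ^ 2) * (X 0 ^ 2 + C a * X 1 ^ 2)) ∧
    ((projRoots f).ncard = 2 →
      ∃ (A : Matrix (Fin 2) (Fin 2) ℝ) (lam a : ℝ), IsUnit A.det ∧ lam ≠ 0 ∧ a < 0 ∧
        C lam * subst A f = (X 0 ^ 2 + X 1 ^ 2) * (X 0 ^ 2 + C a * X 1 ^ 2)) ∧
    ((projRoots f).ncard = 4 →
      ∃ (A : Matrix (Fin 2) (Fin 2) ℝ) (lam a : ℝ), IsUnit A.det ∧ lam ≠ 0 ∧ a < 0 ∧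
        C lam * subst A f = (X 0 ^ 2 - X 1 ^ 2) * (X 0 ^ 2 + C a * X 1 ^ 2)) := by
  obtain ⟨c, hc⟩ := eval_FF f hf
  obtain ⟨p, q, r, s, lam, a, hd, hl, H⟩ := canon_FF c (good_of_sf f hsf c hc)
  have hu : IsUnit (!![p,q;r,s] : Matrix (Fin 2) (Fin 2) ℝ).det := by
    rw [Matrix.det_fin_two_of]; exact hd.isUnit
  rcases H with ⟨ha, h⟩ | ⟨ha, h⟩ | ⟨ha, ha1, h⟩
  · have hn : (projRoots f).ncard = 0 := by
      rw [count f c hc _ p q r s lam hd hl h (by norm_num)]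
      have : {t : ℝ | (t^2+1^2)*(t^2+a*1^2) = 0} = ∅ := by
        ext t
        simp only [Set.mem_setOf_eq, Set.mem_empty_iff_false, iff_false]
        positivity
      rw [this, Set.ncard_empty]
    refine ⟨fun _ => ⟨_, lam, a, hu, hl, ha, finish f c hc p q r s lam _ (fun x y => ?_)⟩,
      fun h => by omega, fun h => by omega⟩
    rw [h]; simp
  · have hn : (projRoots f).ncard = 2 := by
      rw [count f c hc _ p q r s lam hd hl h (by norm_num)]
      obtain ⟨w, hw, rfl⟩ := sq_cases a ha
      have : {t : ℝ | (t^2+1^2)*(t^2+(-w^2)*1^2) = 0} = {w, -w} := by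
        ext t
        simp only [Set.mem_setOf_eq, Set.mem_insert_iff, Set.mem_singleton_iff]
        constructor
        · intro h
          rcases mul_eq_zero.1 h with h | h
          · nlinarith [sq_nonneg t]
          · exact sq_eq_sq_iff_eq_or_eq_neg.1 (by linarith)
        · rintro (rfl | rfl) <;> ring
      rw [this, Set.ncard_pair (by linarith)]
    refine ⟨fun h => by omega,
      fun _ => ⟨_, lam, a, hu, hl, ha, finish f c hc p q r s lam _ (fun x y => ?_)⟩,
      fun h => by omega⟩
    rw [h]; simp
  · have hn : (projRoots f).ncard = 4 := by
      rw [count f c hc _ p q r s lam hd hl h (by norm_num)]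
      obtain ⟨w, hw, rfl⟩ := sq_cases a ha
      have hw1 : w ≠ 1 := by rintro rfl; simp at ha1
      have : {t : ℝ | (t^2-1^2)*(t^2+(-w^2)*1^2) = 0} = (({w, -w, 1, -1} : Finset ℝ) : Set ℝ) := by
        ext t
        simp only [Set.mem_setOf_eq, Finset.coe_insert, Finset.coe_singleton, Set.mem_insert_iff, Set.mem_singleton_iff]
        constructor
        · intro h
          rcases mul_eq_zero.1 h with h | h
          · have := sq_eq_sq_iff_eq_or_eq_neg.1 (show t^2 = 1^2 by linarith)
            tauto
          · have := sq_eq_sq_iff_eq_or_eq_neg.1 (show t^2 = w^2 by linarith)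
            tauto
        · rintro (rfl | rfl | rfl | rfl) <;> ring
      rw [this, Set.ncard_coe_finset]
      rw [Finset.card_insert_of_notMem, Finset.card_insert_of_notMem, Finset.card_pair]
      · norm_num
      · simp only [Finset.mem_insert, Finset.mem_singleton]
        rintro (h | h)
        · linarith
        · exact hw1 (by linarith)
      · simp only [Finset.mem_insert, Finset.mem_singleton]
        rintro (h | h | h)
        · linarith
        · exact hw1 h
        · linarith
    refine ⟨fun h => by omega, fun h => by omega,
      fun _ => ⟨_, lam, a, hu, hl, ha, finish f c hc p q r s lam _ (fun x y => ?_)⟩⟩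
    rw [h]; simp
end
end

section
/- Canonical forms for real binary quintics: let f be a real binary quintic with distinct roots (squarefree over ℂ). (1) If f has exactly one real root, there exist A ∈ GL₂(ℝ), λ ∈ ℝ \ {0} and a, b ∈ ℝ with b − a² > 0 such that λ·f(A(x,y)) = x(x²+y²)(x²+2axy+by²). (2) If f has exactly three distinct real roots, there exist A ∈ GL₂(ℝ), λ ≠ 0 and a, b with b − a² < 0 such that λ·f(A(x,y)) = x(x²+y²)(x²+2axy+by²). (3) If f has five distinct real roots, there exist A ∈ GL₂(ℝ), λ ≠ 0 and a, b with b − a² < 0 such that λ·f(A(x,y)) = x(x²−y²)(x²+2axy+by²). -/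
open MvPolynomial

noncomputable section

/-- quadratic form -/
def quadF (q : ℝ × ℝ × ℝ) : MvPolynomial (Fin 2) ℝ :=
  C q.1 * X 0 ^ 2 + C q.2.1 * X 0 * X 1 + C q.2.2 * X 1 ^ 2

def linF (l : ℝ × ℝ) : MvPolynomial (Fin 2) ℝ := lin l.1 l.2

def DefQ (q : ℝ × ℝ × ℝ) : Prop := 0 < 4 * q.1 * q.2.2 - q.2.1 ^ 2

def FactT (n : ℕ) (f : MvPolynomial (Fin 2) ℝ) : Prop :=
  ∃ (c : ℝ) (L : List (ℝ × ℝ)) (Q : List (ℝ × ℝ × ℝ)), c ≠ 0 ∧ L.length + 2 * Q.length = n ∧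
    (∀ l ∈ L, l ≠ (0, 0)) ∧ (∀ q ∈ Q, DefQ q) ∧
    f = C c * (L.map linF).prod * (Q.map quadF).prod

lemma FactT.mulLin {n : ℕ} {f : MvPolynomial (Fin 2) ℝ} (h : FactT n f) (l : ℝ × ℝ)
    (hl : l ≠ (0, 0)) : FactT (n + 1) (linF l * f) := by
  obtain ⟨c, L, Q, hc, hn, hL, hQ, rfl⟩ := h
  refine ⟨c, l :: L, Q, hc, ?_, ?_, hQ, ?_⟩
  · simp; omega
  · simpa using ⟨hl, fun a b => by simpa using hL (a, b)⟩
  · simp; ring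

lemma FactT.mulQuad {n : ℕ} {f : MvPolynomial (Fin 2) ℝ} (h : FactT n f) (q : ℝ × ℝ × ℝ)
    (hq : DefQ q) : FactT (n + 2) (quadF q * f) := by
  obtain ⟨c, L, Q, hc, hn, hL, hQ, rfl⟩ := h
  refine ⟨c, L, q :: Q, hc, ?_, hL, ?_, ?_⟩
  · simp; omega
  · intro a ha
    rcases List.mem_cons.1 ha with rfl | h
    · exact hq
    · exact hQ _ h
  · simp; ring

lemma factT_homogenize (n : ℕ) : ∀ p : Polynomial ℝ, p ≠ 0 → p.natDegree ≤ n →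
    FactT n (p.homogenize n) := by
  induction n using Nat.strong_induction_on with
  | _ n ih =>
  intro p hp hd
  rcases Nat.eq_zero_or_pos n with rfl | hn
  · obtain ⟨c, rfl⟩ := Polynomial.natDegree_eq_zero.1 (Nat.le_zero.1 hd)
    refine ⟨c, [], [], ?_, rfl, by simp, by simp, by simp⟩
    rintro rfl; simp at hp
  rcases Nat.lt_or_ge p.natDegree n with hlt | hge
  · obtain ⟨m, rfl⟩ : ∃ m, n = m + 1 := ⟨n - 1, by omega⟩
    have h1 := (ih m (by omega) p hp (by omega)).mulLin (0, 1) (by simp)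
    convert h1 using 1
    have := Polynomial.homogenize_mul p 1 (m := m) (n := 1) (by omega) (by simp)
    rw [mul_one] at this
    rw [this]
    simp [linF, lin, mul_comm]
  have hdn : p.natDegree = n := le_antisymm hd hge
  have hnu : ¬ IsUnit p := fun h => by
    have := Polynomial.natDegree_eq_zero_of_isUnit h
    omega
  obtain ⟨q, hq, r, rfl⟩ := WfDvdMonoid.exists_irreducible_factor hnu hp
  have hr0 : r ≠ 0 := right_ne_zero_of_mul hp
  have hadd := Polynomial.natDegree_mul hq.ne_zero hr0
  have hle : q.natDegree ≤ 2 := Polynomial.natDegree_le_of_degree_le hq.degree_le_two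
  have hpos : 0 < q.natDegree := hq.natDegree_pos
  have hcase : q.natDegree = 1 ∨ q.natDegree = 2 := by omega
  rcases hcase with h1 | h2
  · obtain ⟨m, rfl⟩ : ∃ m, n = m + 1 := ⟨n - 1, by omega⟩
    have hq1 := Polynomial.eq_X_add_C_of_natDegree_le_one h1.le
    have ha : q.coeff 1 ≠ 0 := by
      have := Polynomial.leadingCoeff_ne_zero.2 hq.ne_zero
      rwa [Polynomial.leadingCoeff, h1] at this
    have h := (ih m (by omega) r hr0 (by omega)).mulLin (q.coeff 1, q.coeff 0) (by simp [ha])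
    convert h using 1
    rw [add_comm m 1, Polynomial.homogenize_mul q r h1.le (by omega)]
    congr 1
    rw [hq1]
    simp [linF, lin]
  · obtain ⟨m, rfl⟩ : ∃ m, n = m + 2 := ⟨n - 2, by omega⟩
    have hq1 := Polynomial.eq_quadratic_of_degree_le_two hq.degree_le_two
    have ha : q.coeff 2 ≠ 0 := by
      have := Polynomial.leadingCoeff_ne_zero.2 hq.ne_zero
      rwa [Polynomial.leadingCoeff, h2] at this
    have hdef : DefQ (q.coeff 2, q.coeff 1, q.coeff 0) := by
      unfold DefQ
      by_contra hneg
      simp only [not_lt] at hneg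
      set D := q.coeff 1 ^ 2 - 4 * q.coeff 2 * q.coeff 0 with hD
      have hD0 : 0 ≤ D := by linarith
      have hs := Real.sq_sqrt hD0
      have hroot : q.IsRoot ((-q.coeff 1 + √D) / (2 * q.coeff 2)) := by
        have he : ∀ x, q.eval x = q.coeff 2 * x ^ 2 + q.coeff 1 * x + q.coeff 0 := fun x => by
          conv_lhs => rw [hq1]
          simp
        rw [Polynomial.IsRoot, he]
        field_simp
        linear_combination hs + hD
      have := Polynomial.degree_eq_one_of_irreducible_of_root hq hroot
      have := Polynomial.natDegree_eq_of_degree_eq_some (n := 1) this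
      omega
    have h := (ih m (by omega) r hr0 (by omega)).mulQuad _ hdef
    convert h using 1
    rw [add_comm m 2, Polynomial.homogenize_mul q r h2.le (by omega)]
    congr 1
    rw [hq1]
    simp [quadF]
    ring

lemma factT_of_homog {f : MvPolynomial (Fin 2) ℝ} {n : ℕ} (hf : f.IsHomogeneous n) (h0 : f ≠ 0) :
    FactT n f := by
  have h := Polynomial.homogenize_eq_of_isHomogeneous hf rfl
  set p : Polynomial ℝ := MvPolynomial.aeval ![Polynomial.X, 1] f with hp
  rw [← h]
  apply factT_homogenize
  · intro h1
    rw [h1] at h; simp at h; exact h0 h.symm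
  · have : p = MvPolynomial.aeval ![(Polynomial.X : Polynomial ℝ), 1] (p.homogenize n) := by rw [h]
    rw [this, Polynomial.homogenize, map_sum]
    apply Polynomial.natDegree_sum_le_of_forall_le
    rintro ⟨k, l⟩ hkl
    have hkl := Finset.HasAntidiagonal.mem_antidiagonal.1 hkl
    rw [MvPolynomial.aeval_monomial, Finsupp.prod_fintype _ _ (by simp)]
    simp [Fin.prod_univ_two]
    refine (Polynomial.natDegree_C_mul_X_pow_le _ _).trans (by omega)

lemma lin_sq_not_dvd {f : MvPolynomial (Fin 2) ℝ} (hsf : SquarefreeC f) (l : ℝ × ℝ)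
    (h : linF l * linF l ∣ f) : False := by
  have h1 := map_dvd (MvPolynomial.map (algebraMap ℝ ℂ)) h
  rw [map_mul] at h1
  have h2 := hsf _ h1
  have h3 := h2.map (MvPolynomial.eval (0 : Fin 2 → ℂ))
  simp [linF, lin] at h3

/-- bracket -/
def br (l m : ℝ × ℝ) : ℝ := l.1 * m.2 - m.1 * l.2

lemma prop_of_br {l m : ℝ × ℝ} (hl : l ≠ (0, 0)) (h : br l m = 0) : ∃ t : ℝ, m = (t * l.1, t * l.2) := by
  obtain ⟨a, b⟩ := l
  obtain ⟨c, d⟩ := m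
  simp only [br] at *
  by_cases ha : a = 0
  · have hb : b ≠ 0 := by rintro rfl; simp [ha] at hl
    refine ⟨d / b, ?_⟩
    ext
    · simp [ha] at h ⊢; tauto
    · field_simp
  · refine ⟨c / a, ?_⟩
    ext
    · field_simp
    · field_simp; linarith

lemma br_ne {f g : MvPolynomial (Fin 2) ℝ} (hsf : SquarefreeC f) {l m : ℝ × ℝ} (hl : l ≠ (0, 0))
    (h : f = linF l * linF m * g) : br l m ≠ 0 := by
  intro hb
  obtain ⟨t, rfl⟩ := prop_of_br hl hb
  apply lin_sq_not_dvd hsf l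
  refine ⟨C t * g, ?_⟩
  rw [h]
  simp [linF, lin]; ring

lemma ncard_roots {k : ℕ} (v : Fin k → ℝ × ℝ) (g f : MvPolynomial (Fin 2) ℝ)
    (hv : ∀ j, v j ≠ (0, 0)) (hb : ∀ i j, i ≠ j → br (v i) (v j) ≠ 0)
    (hg : ∀ x : Fin 2 → ℝ, x ≠ 0 → eval x g ≠ 0)
    (hf : f = (∏ j, linF (v j)) * g) : (projRoots f).ncard = k := by
  have hw : ∀ j, (![-(v j).2, (v j).1] : Fin 2 → ℝ) ≠ 0 := by
    intro j h
    apply hv j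
    have h0 := congrFun h 0
    have h1 := congrFun h 1
    simp at h0 h1
    exact Prod.ext h1 h0
  have hr : projRoots f = Set.range (fun j => Projectivization.mk ℝ _ (hw j)) := by
    ext p
    simp only [projRoots, Set.mem_ofPred_eq, Set.mem_range, hf, map_mul, map_prod, mul_eq_zero,
      Finset.prod_eq_zero_iff, Finset.mem_univ, true_and, hg _ p.rep_nonzero, or_false]
    refine exists_congr fun j => ?_
    conv_rhs => rw [← p.mk_rep, Projectivization.mk_eq_mk_iff']
    simp only [linF, lin, map_add, map_mul, eval_C, eval_X]
    constructor
    · intro h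
      obtain ⟨t, ht⟩ := prop_of_br (l := (p.rep 0, p.rep 1)) (m := (-(v j).2, (v j).1)) (by
        intro h
        apply p.rep_nonzero
        simp at h
        ext i; fin_cases i
        · exact h.1
        · exact h.2) (by simp [br]; linarith)
      refine ⟨t, ?_⟩
      simp at ht
      ext i; fin_cases i
      · simp [ht.1]
      · simp [ht.2]
    · rintro ⟨t, ht⟩
      have h0 := congrFun ht 0
      have h1 := congrFun ht 1
      simp at h0 h1
      rw [← h1]
      linear_combination p.rep 1 * h0
  rw [hr, ← Nat.card_coe_set_eq, Nat.card_range_of_injective, Nat.card_fin]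
  intro i j hij
  by_contra hne
  simp only [Projectivization.mk_eq_mk_iff'] at hij
  obtain ⟨t, ht⟩ := hij
  have h0 := congrFun ht 0
  have h1 := congrFun ht 1
  simp at h0 h1
  apply hb i j hne
  rw [br, ← h0, ← h1]; ring

lemma normal_form (c d ε : ℝ) (l : ℝ × ℝ) (Q R : ℝ × ℝ × ℝ) (hc : c ≠ 0) (hd : d ≠ 0)
    (hε : ε * ε = 1) (hD : Q.1 * Q.2.2 - Q.2.1 ^ 2 / 4 = ε * d ^ 2)
    (hK : Q.2.2 * l.1 ^ 2 - Q.2.1 * l.1 * l.2 + Q.1 * l.2 ^ 2 ≠ 0)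
    (hE : R.1 * (Q.2.2 * l.1 - Q.2.1 * l.2 / 2) ^ 2
      + R.2.1 * (Q.2.2 * l.1 - Q.2.1 * l.2 / 2) * (Q.1 * l.2 - Q.2.1 * l.1 / 2)
      + R.2.2 * (Q.1 * l.2 - Q.2.1 * l.1 / 2) ^ 2 ≠ 0) :
    ∃ (A : Matrix (Fin 2) (Fin 2) ℝ) (lam a b : ℝ), IsUnit A.det ∧ lam ≠ 0 ∧
      (∃ k : ℝ, 0 < k ∧ b - a ^ 2 = k * (4 * R.1 * R.2.2 - R.2.1 ^ 2)) ∧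
        C lam * subst A (C c * linF l * quadF Q * quadF R) =
          X 0 * (X 0 ^ 2 + C ε * X 1 ^ 2) *
            (X 0 ^ 2 + C (2 * a) * X 0 * X 1 + C b * X 1 ^ 2) := by
  obtain ⟨a, b⟩ := l
  obtain ⟨q1, q2, q3⟩ := Q
  obtain ⟨r1, r2, r3⟩ := R
  simp only at *
  obtain ⟨K, hKd⟩ : ∃ K, K = q3 * a ^ 2 - q2 * a * b + q1 * b ^ 2 := ⟨_, rfl⟩
  obtain ⟨p, hp⟩ : ∃ p, p = (q3 * a - q2 * b / 2) / d := ⟨_, rfl⟩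
  obtain ⟨r, hr⟩ : ∃ r, r = (q1 * b - q2 * a / 2) / d := ⟨_, rfl⟩
  have hp' : q3 * a - q2 * b / 2 = p * d := by rw [hp]; field_simp
  have hr' : q1 * b - q2 * a / 2 = r * d := by rw [hr]; field_simp
  rw [hp', hr'] at hE
  rw [← hKd] at hK
  obtain ⟨E, hEd⟩ : ∃ E, E = r1 * p ^ 2 + r2 * p * r + r3 * r ^ 2 := ⟨_, rfl⟩
  have hE0 : E ≠ 0 := by
    intro h
    apply hE
    linear_combination d ^ 2 * (h - hEd)
  have hε0 : ε ≠ 0 := left_ne_zero_of_mul (hε.symm ▸ one_ne_zero)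
  -- determinant
  have hdet : (p * a + b * r) * d = K := by
    rw [hKd]; linear_combination -a * hp' - b * hr'
  have hdet' : p * a + b * r = K / d := by rw [← hdet]; field_simp
  have hdet0 : p * a + b * r ≠ 0 := by rw [hdet']; positivity
  -- Q at e1
  have hQ1 : q1 * p ^ 2 + q2 * p * r + q3 * r ^ 2 = ε * K := by
    have : (q1 * p ^ 2 + q2 * p * r + q3 * r ^ 2) * d ^ 2 = ε * K * d ^ 2 := by
      have : (q1 * p ^ 2 + q2 * p * r + q3 * r ^ 2) * d ^ 2
        = q1 * (p * d) ^ 2 + q2 * (p * d) * (r * d) + q3 * (r * d) ^ 2 := by ring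
      rw [this, ← hp', ← hr', hKd]
      linear_combination (q3 * a ^ 2 - q2 * a * b + q1 * b ^ 2) * hD
    exact mul_right_cancel₀ (pow_ne_zero 2 hd) this
  have hQ2 : 2 * q1 * p * (-b) + q2 * (p * a - b * r) + 2 * q3 * r * a = 0 := by
    have : (2 * q1 * p * (-b) + q2 * (p * a - b * r) + 2 * q3 * r * a) * d = 0 := by
      have : (2 * q1 * p * (-b) + q2 * (p * a - b * r) + 2 * q3 * r * a) * d =
       2 * q1 * (p * d) * (-b) + q2 * ((p * d) * a - b * (r * d)) + 2 * q3 * (r * d) * a := by ring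
      rw [this, ← hp', ← hr']; ring
    exact (mul_eq_zero.1 this).resolve_right hd
  refine ⟨!![p, -b; r, a], (c * (K / d) * (ε * K) * E)⁻¹,
    (-2 * r1 * p * b + r2 * (p * a - b * r) + 2 * r3 * r * a) / (2 * E),
    (r1 * b ^ 2 - r2 * a * b + r3 * a ^ 2) / E, ?_, ?_, ?_, ?_⟩
  · rw [isUnit_iff_ne_zero, Matrix.det_fin_two]
    simpa [sub_eq_add_neg] using hdet0
  · positivity
  · refine ⟨(p * a + b * r) ^ 2 / (4 * E ^ 2), by positivity, ?_⟩
    field_simp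
    rw [hEd]
    ring
  · apply MvPolynomial.funext
    intro x
    simp only [subst, linF, lin, quadF, map_mul, map_add, map_pow, aeval_C, aeval_X,
      MvPolynomial.algebraMap_eq, eval_C, eval_X]
    simp
    generalize x 1 = y
    generalize x 0 = x
    have e1 : a * (p * x + -(b * y)) + b * (r * x + a * y) = K / d * x := by
      rw [← hdet']; ring
    have e2 : q1 * (p * x + -(b * y)) ^ 2 + q2 * (p * x + -(b * y)) * (r * x + a * y)
       + q3 * (r * x + a * y) ^ 2 = ε * K * (x ^ 2 + ε * y ^ 2) := by
      linear_combination x ^ 2 * hQ1 + x * y * hQ2 - y ^ 2 * hKd - K * y ^ 2 * hε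
    have e3 : r1 * (p * x + -(b * y)) ^ 2 + r2 * (p * x + -(b * y)) * (r * x + a * y)
       + r3 * (r * x + a * y) ^ 2 = E * (x ^ 2 + 2 * ((-2 * r1 * p * b + r2 * (p * a - b * r) + 2 * r3 * r * a) / (2 * E)) * x * y + (r1 * b ^ 2 - r2 * a * b + r3 * a ^ 2) / E * y ^ 2) := by
      field_simp
      rw [hEd]; ring
    simp only [neg_mul] at e3
    rw [e1, e2, e3]
    field_simp

lemma linF_mul (l m : ℝ × ℝ) :
    linF l * linF m = quadF (l.1 * m.1, l.1 * m.2 + m.1 * l.2, l.2 * m.2) := by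
  simp [linF, lin, quadF]; ring

/-- polar of the dual quadratic form -/
def pol (Q : ℝ × ℝ × ℝ) (l m : ℝ × ℝ) : ℝ :=
  Q.2.2 * l.1 * m.1 - Q.2.1 / 2 * (l.1 * m.2 + l.2 * m.1) + Q.1 * l.2 * m.2

lemma pol_self_ne {Q : ℝ × ℝ × ℝ} (hQ : DefQ Q) {l : ℝ × ℝ} (hl : l ≠ (0, 0)) : pol Q l l ≠ 0 := by
  obtain ⟨a, b⟩ := l
  obtain ⟨q1, q2, q3⟩ := Q
  simp only [DefQ, pol] at *
  intro h
  have h3 : q3 ≠ 0 := by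
    rintro rfl
    nlinarith [sq_nonneg q2]
  have h1 : (2 * q3 * a - q2 * b) ^ 2 + (4 * q1 * q3 - q2 ^ 2) * b ^ 2 = 0 := by
    linear_combination 4 * q3 * h
  have hb : b = 0 := by
    by_contra hb
    have : 0 < (4 * q1 * q3 - q2 ^ 2) * b ^ 2 := by positivity
    nlinarith [sq_nonneg (2 * q3 * a - q2 * b)]
  subst hb
  have ha : a = 0 := by simpa [h3] using h1
  simp [ha] at hl

lemma case_def (f : MvPolynomial (Fin 2) ℝ) (c : ℝ) (l : ℝ × ℝ) (Q R : ℝ × ℝ × ℝ) (hc : c ≠ 0)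
    (hQ : DefQ Q) (hl : l ≠ (0, 0)) (hE : R.1 * (Q.2.2 * l.1 - Q.2.1 * l.2 / 2) ^ 2
      + R.2.1 * (Q.2.2 * l.1 - Q.2.1 * l.2 / 2) * (Q.1 * l.2 - Q.2.1 * l.1 / 2)
      + R.2.2 * (Q.1 * l.2 - Q.2.1 * l.1 / 2) ^ 2 ≠ 0)
    (hf : f = C c * linF l * quadF Q * quadF R) :
    ∃ (A : Matrix (Fin 2) (Fin 2) ℝ) (lam a b : ℝ), IsUnit A.det ∧ lam ≠ 0 ∧
      (∃ k : ℝ, 0 < k ∧ b - a ^ 2 = k * (4 * R.1 * R.2.2 - R.2.1 ^ 2)) ∧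
        C lam * subst A f = X 0 * (X 0 ^ 2 + X 1 ^ 2) *
            (X 0 ^ 2 + C (2 * a) * X 0 * X 1 + C b * X 1 ^ 2) := by
  have hD : 0 < Q.1 * Q.2.2 - Q.2.1 ^ 2 / 4 := by unfold DefQ at hQ; linarith
  have := normal_form c (√(Q.1 * Q.2.2 - Q.2.1 ^ 2 / 4)) 1 l Q R hc (Real.sqrt_ne_zero'.2 hD)
    (by norm_num) (by rw [Real.sq_sqrt hD.le, one_mul]) (by
      have := pol_self_ne hQ hl
      unfold pol at this
      intro h
      apply this
      linear_combination h) hE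
  rw [hf]
  simpa using this

lemma case_one (f : MvPolynomial (Fin 2) ℝ) (c : ℝ) (l : ℝ × ℝ) (Q R : ℝ × ℝ × ℝ) (hc : c ≠ 0)
    (hQ : DefQ Q) (hR : DefQ R) (hl : l ≠ (0, 0)) (hf : f = C c * linF l * quadF Q * quadF R) :
    ∃ (A : Matrix (Fin 2) (Fin 2) ℝ) (lam a b : ℝ), IsUnit A.det ∧ lam ≠ 0 ∧
      0 < b - a ^ 2 ∧
        C lam * subst A f = X 0 * (X 0 ^ 2 + X 1 ^ 2) *
            (X 0 ^ 2 + C (2 * a) * X 0 * X 1 + C b * X 1 ^ 2) := by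
  have h1 := pol_self_ne hQ hl
  have h2 := pol_self_ne hR (l := (Q.1 * l.2 - Q.2.1 * l.1 / 2, -(Q.2.2 * l.1 - Q.2.1 * l.2 / 2))) (by
    intro h
    simp only [Prod.mk.injEq] at h
    apply h1
    unfold pol
    linear_combination l.2 * h.1 - l.1 * h.2)
  obtain ⟨A, lam, a, b, hA, hlam, ⟨k, hk, hb⟩, h⟩ := case_def f c l Q R hc hQ hl (by
    intro h; apply h2; unfold pol; linear_combination h) hf
  refine ⟨A, lam, a, b, hA, hlam, ?_, h⟩
  rw [hb]
  exact mul_pos hk hR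

lemma case_three_aux (f : MvPolynomial (Fin 2) ℝ) (c : ℝ) (l m n : ℝ × ℝ) (Q : ℝ × ℝ × ℝ)
    (hc : c ≠ 0) (hQ : DefQ Q) (hl : l ≠ (0, 0)) (hmn : br m n ≠ 0) (hm : pol Q l m ≠ 0)
    (hn : pol Q l n ≠ 0)
    (hf : f = C c * linF l * linF m * linF n * quadF Q) :
    ∃ (A : Matrix (Fin 2) (Fin 2) ℝ) (lam a b : ℝ), IsUnit A.det ∧ lam ≠ 0 ∧
      b - a ^ 2 < 0 ∧
        C lam * subst A f = X 0 * (X 0 ^ 2 + X 1 ^ 2) *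
            (X 0 ^ 2 + C (2 * a) * X 0 * X 1 + C b * X 1 ^ 2) := by
  obtain ⟨A, lam, a, b, hA, hlam, ⟨k, hk, hb⟩, h⟩ := case_def f c l Q
    (m.1 * n.1, m.1 * n.2 + n.1 * m.2, m.2 * n.2) hc hQ hl (by
    intro h; apply mul_ne_zero hm hn; unfold pol; linear_combination h)
    (by rw [hf, ← linF_mul]; ring)
  refine ⟨A, lam, a, b, hA, hlam, ?_, h⟩
  rw [hb]
  have : 0 < br m n ^ 2 := by positivity
  have h2 : 4 * (m.1 * n.1) * (m.2 * n.2) - (m.1 * n.2 + n.1 * m.2) ^ 2 = - br m n ^ 2 := by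
    unfold br; ring
  simp only [h2]
  nlinarith

lemma pol_not_both {Q : ℝ × ℝ × ℝ} (hQ : DefQ Q) {l m n : ℝ × ℝ} (hl : l ≠ (0, 0))
    (hmn : br m n ≠ 0) (hm : pol Q l m = 0) (hn : pol Q l n = 0) : False := by
  have h1 := pol_self_ne hQ hl
  apply mul_ne_zero h1 hmn
  unfold pol at *
  unfold br
  linear_combination (l.1 * n.2 - n.1 * l.2) * hm - (l.1 * m.2 - m.1 * l.2) * hn

lemma pol_symm (Q : ℝ × ℝ × ℝ) (l m : ℝ × ℝ) : pol Q l m = pol Q m l := by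
  unfold pol; ring

lemma br_symm {l m : ℝ × ℝ} (h : br l m ≠ 0) : br m l ≠ 0 := by
  intro h'; apply h; unfold br at *; linarith

lemma case_three (f : MvPolynomial (Fin 2) ℝ) (c : ℝ) (l m n : ℝ × ℝ) (Q : ℝ × ℝ × ℝ)
    (hc : c ≠ 0) (hQ : DefQ Q) (hl : l ≠ (0, 0)) (hm : m ≠ (0, 0)) (hn : n ≠ (0, 0))
    (hlm : br l m ≠ 0) (hln : br l n ≠ 0) (hmn : br m n ≠ 0)
    (hf : f = C c * linF l * linF m * linF n * quadF Q) :
    ∃ (A : Matrix (Fin 2) (Fin 2) ℝ) (lam a b : ℝ), IsUnit A.det ∧ lam ≠ 0 ∧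
      b - a ^ 2 < 0 ∧
        C lam * subst A f = X 0 * (X 0 ^ 2 + X 1 ^ 2) *
            (X 0 ^ 2 + C (2 * a) * X 0 * X 1 + C b * X 1 ^ 2) := by
  by_cases h1 : pol Q l m = 0
  · refine case_three_aux f c n l m Q hc hQ hn hlm ?_ ?_ (by rw [hf]; ring)
    · intro h; rw [pol_symm] at h; exact pol_not_both hQ hl hmn h1 h
    · intro h; rw [pol_symm] at h h1; exact pol_not_both hQ hm hln h1 h
  by_cases h2 : pol Q l n = 0
  · refine case_three_aux f c m l n Q hc hQ hm hln ?_ ?_ (by rw [hf]; ring)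
    · rwa [pol_symm]
    · intro h; rw [pol_symm] at h h2; exact pol_not_both hQ hn hlm h2 h
  exact case_three_aux f c l m n Q hc hQ hl hmn h1 h2 hf

lemma case_five_aux (f : MvPolynomial (Fin 2) ℝ) (c s : ℝ) (l1 l2 l3 l4 l5 : ℝ × ℝ)
    (hc : c ≠ 0) (h23 : br l2 l3 ≠ 0) (h45 : br l4 l5 ≠ 0)
    (h1 : 0 < br l1 l2 * br l1 l3 * s) (h4 : 0 < br l4 l2 * br l4 l3 * s)
    (h5 : 0 < br l5 l2 * br l5 l3 * s)
    (hf : f = C c * linF l1 * linF l2 * linF l3 * linF l4 * linF l5) :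
    ∃ (A : Matrix (Fin 2) (Fin 2) ℝ) (lam a b : ℝ), IsUnit A.det ∧ lam ≠ 0 ∧
      b - a ^ 2 < 0 ∧
        C lam * subst A f = X 0 * (X 0 ^ 2 - X 1 ^ 2) *
            (X 0 ^ 2 + C (2 * a) * X 0 * X 1 + C b * X 1 ^ 2) := by
  have key : ∀ m : ℝ × ℝ, 0 < br m l2 * br m l3 * s →
      br l1 l2 * br m l3 + br l1 l3 * br m l2 ≠ 0 := by
    intro m hm h
    have e : (br l1 l2 * br l1 l3 * s) * br m l3 ^ 2 + (br m l2 * br m l3 * s) * br l1 l3 ^ 2 = 0 := by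
      linear_combination (br l1 l3 * br m l3 * s) * h
    have : br m l3 ≠ 0 := by intro h0; simp [h0] at hm
    have p1 : 0 < (br l1 l2 * br l1 l3 * s) * br m l3 ^ 2 := by positivity
    have p2 : 0 ≤ (br m l2 * br m l3 * s) * br l1 l3 ^ 2 := by positivity
    linarith
  have k4 := key l4 h4
  have k5 := key l5 h5
  have := normal_form c (br l2 l3 / 2) (-1) l1
    (l2.1 * l3.1, l2.1 * l3.2 + l3.1 * l2.2, l2.2 * l3.2)
    (l4.1 * l5.1, l4.1 * l5.2 + l5.1 * l4.2, l4.2 * l5.2) hc (by positivity) (by norm_num)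
    (by unfold br; ring)
    (by
      have : br l1 l2 * br l1 l3 ≠ 0 := by intro h0; simp [h0] at h1
      intro h; apply this; unfold br; linear_combination h)
    (by
      intro h; apply mul_ne_zero k4 k5; unfold br; linear_combination 4 * h)
  rw [← linF_mul, ← linF_mul] at this
  obtain ⟨A, lam, a, b, hA, hlam, ⟨k, hk, hb⟩, h⟩ := this
  refine ⟨A, lam, a, b, hA, hlam, ?_, ?_⟩
  · rw [hb]
    have : 0 < br l4 l5 ^ 2 := by positivity
    have h2 : 4 * (l4.1 * l5.1) * (l4.2 * l5.2) - (l4.1 * l5.2 + l5.1 * l4.2) ^ 2 = - br l4 l5 ^ 2 := by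
      unfold br; ring
    simp only [h2]
    nlinarith
  · have e : f = C c * linF l1 * (linF l2 * linF l3) * (linF l4 * linF l5) := by rw [hf]; ring
    rw [e, h]
    simp [sub_eq_add_neg]

lemma case_five (f : MvPolynomial (Fin 2) ℝ) (c : ℝ) (v : Fin 5 → ℝ × ℝ)
    (hc : c ≠ 0) (h0 : v 0 ≠ (0, 0)) (hb : ∀ i j, i ≠ j → br (v i) (v j) ≠ 0)
    (hf : f = C c * linF (v 0) * linF (v 1) * linF (v 2) * linF (v 3) * linF (v 4)) :
    ∃ (A : Matrix (Fin 2) (Fin 2) ℝ) (lam a b : ℝ), IsUnit A.det ∧ lam ≠ 0 ∧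
      b - a ^ 2 < 0 ∧
        C lam * subst A f = X 0 * (X 0 ^ 2 - X 1 ^ 2) *
            (X 0 ^ 2 + C (2 * a) * X 0 * X 1 + C b * X 1 ^ 2) := by
  obtain ⟨j, hj, hmax⟩ := Finset.exists_max_image ({1, 2, 3, 4} : Finset (Fin 5))
    (fun i => ((v i).1 * (v 0).1 + (v i).2 * (v 0).2) / br (v i) (v 0)) ⟨1, by simp⟩
  have hN : 0 < (v 0).1 ^ 2 + (v 0).2 ^ 2 := by
    by_contra h
    apply h0
    have a1 : (v 0).1 = 0 := by nlinarith [sq_nonneg (v 0).1, sq_nonneg (v 0).2]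
    have a2 : (v 0).2 = 0 := by nlinarith [sq_nonneg (v 0).1, sq_nonneg (v 0).2]
    exact Prod.ext a1 a2
  have hj0 : j ≠ 0 := by rintro rfl; simp at hj
  have hpos : ∀ i, i ≠ 0 → i ≠ j → 0 < br (v i) (v j) * br (v i) (v 0) * br (v j) (v 0) := by
    intro i hi hij
    have hm := hmax i (by revert hi; fin_cases i <;> simp)
    have bi := hb i 0 hi
    have bj := hb j 0 hj0
    have bij := hb i j hij
    set ti := ((v i).1 * (v 0).1 + (v i).2 * (v 0).2) / br (v i) (v 0) with hti
    set tj := ((v j).1 * (v 0).1 + (v j).2 * (v 0).2) / br (v j) (v 0) with htj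
    have e1 : ti * br (v i) (v 0) = (v i).1 * (v 0).1 + (v i).2 * (v 0).2 := by
      rw [hti]; field_simp
    have e2 : tj * br (v j) (v 0) = (v j).1 * (v 0).1 + (v j).2 * (v 0).2 := by
      rw [htj]; field_simp
    clear_value ti tj
    have e3 : ((v 0).1 ^ 2 + (v 0).2 ^ 2) * br (v i) (v j) =
        br (v i) (v 0) * br (v j) (v 0) * (tj - ti) := by
      have : br (v i) (v 0) * br (v j) (v 0) * (tj - ti) =
        br (v i) (v 0) * (tj * br (v j) (v 0)) - br (v j) (v 0) * (ti * br (v i) (v 0)) := by ring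
      rw [this, e1, e2]; unfold br; ring
    have e4 : ((v 0).1 ^ 2 + (v 0).2 ^ 2) * (br (v i) (v j) * br (v i) (v 0) * br (v j) (v 0)) =
        (br (v i) (v 0) * br (v j) (v 0)) ^ 2 * (tj - ti) := by
      linear_combination br (v i) (v 0) * br (v j) (v 0) * e3
    have e5 : 0 ≤ ((v 0).1 ^ 2 + (v 0).2 ^ 2) * (br (v i) (v j) * br (v i) (v 0) * br (v j) (v 0)) := by
      rw [e4]
      exact mul_nonneg (sq_nonneg _) (by linarith)
    exact lt_of_le_of_ne (nonneg_of_mul_nonneg_right e5 hN)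
      (mul_ne_zero (mul_ne_zero bij bi) bj).symm
  have main : ∀ i k m : Fin 5, i ≠ 0 → i ≠ j → k ≠ 0 → k ≠ j → m ≠ 0 → m ≠ j → k ≠ m →
      f = C c * linF (v i) * linF (v j) * linF (v 0) * linF (v k) * linF (v m) →
      ∃ (A : Matrix (Fin 2) (Fin 2) ℝ) (lam a b : ℝ), IsUnit A.det ∧ lam ≠ 0 ∧
      b - a ^ 2 < 0 ∧
        C lam * subst A f = X 0 * (X 0 ^ 2 - X 1 ^ 2) *
            (X 0 ^ 2 + C (2 * a) * X 0 * X 1 + C b * X 1 ^ 2) := by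
    intro i k m i0 ij k0 kj m0 mj km he
    exact case_five_aux f c _ _ _ _ _ _ hc (hb j 0 hj0) (hb k m km) (hpos i i0 ij) (hpos k k0 kj)
      (hpos m m0 mj) he
  simp only [Finset.mem_insert, Finset.mem_singleton] at hj
  rcases hj with rfl | rfl | rfl | rfl
  · exact main 2 3 4 (by decide) (by decide) (by decide) (by decide) (by decide) (by decide)
      (by decide) (by rw [hf]; ring)
  · exact main 1 3 4 (by decide) (by decide) (by decide) (by decide) (by decide) (by decide)
      (by decide) (by rw [hf]; ring)
  · exact main 1 2 4 (by decide) (by decide) (by decide) (by decide) (by decide) (by decide)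
      (by decide) (by rw [hf]; ring)
  · exact main 1 2 3 (by decide) (by decide) (by decide) (by decide) (by decide) (by decide)
      (by decide) (by rw [hf]; ring)

lemma quad_ne {q : ℝ × ℝ × ℝ} (hq : DefQ q) (x : Fin 2 → ℝ) (hx : x ≠ 0) :
    eval x (quadF q) ≠ 0 := by
  have := pol_self_ne hq (l := (-x 1, x 0)) (by
    intro h
    simp at h
    apply hx
    ext i; fin_cases i
    · exact h.2
    · exact h.1)
  intro h
  apply this
  simp [quadF] at h
  unfold pol
  linear_combination h

lemma fact_count {f : MvPolynomial (Fin 2) ℝ} (hsf : SquarefreeC f) (c : ℝ) (L : List (ℝ × ℝ))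
    (Q : List (ℝ × ℝ × ℝ)) (hc : c ≠ 0) (hL : ∀ l ∈ L, l ≠ (0, 0)) (hQ : ∀ q ∈ Q, DefQ q)
    (hf : f = C c * (L.map linF).prod * (Q.map quadF).prod) :
    (∀ i j : Fin L.length, i ≠ j → br L[i] L[j] ≠ 0) ∧ (projRoots f).ncard = L.length := by
  have hp : (L.map linF).prod = ∏ j : Fin L.length, linF L[j] := by
    simp
  have hb : ∀ i j : Fin L.length, i ≠ j → br L[i] L[j] ≠ 0 := by
    intro i j hij
    have h1 := Finset.mul_prod_erase Finset.univ (fun j : Fin L.length => linF L[j]) (Finset.mem_univ i)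
    have h2 := Finset.mul_prod_erase (Finset.univ.erase i) (fun j : Fin L.length => linF L[j])
      (a := j) (by simp [hij.symm])
    refine br_ne hsf (hL _ (by simp)) (g := C c * (∏ x ∈ (Finset.univ.erase i).erase j, linF L[x]) *
      (Q.map quadF).prod) ?_
    rw [hf, hp, ← h1, ← h2]
    ring
  refine ⟨hb, ncard_roots (fun j : Fin L.length => L[j]) (C c * (Q.map quadF).prod) f
    (fun j => hL _ (by simp)) hb ?_ ?_⟩
  · intro x hx
    rw [map_mul, eval_C, map_list_prod]
    refine mul_ne_zero hc (List.prod_ne_zero ?_)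
    simp only [List.map_map, List.mem_map, not_exists, not_and]
    intro q hq
    exact quad_ne (hQ q hq) x hx
  · rw [hf, hp]; ring

/-- canonical forms for real binary quintics with distinct roots,
according to the number of distinct real roots (1, 3, or 5). -/
theorem stmt7 (f : MvPolynomial (Fin 2) ℝ) (hf : f.IsHomogeneous 5)
    (hsf : SquarefreeC f) :
    ((projRoots f).ncard = 1 →
      ∃ (A : Matrix (Fin 2) (Fin 2) ℝ) (lam a b : ℝ), IsUnit A.det ∧ lam ≠ 0 ∧
        0 < b - a ^ 2 ∧
        C lam * subst A f =
          X 0 * (X 0 ^ 2 + X 1 ^ 2) * (X 0 ^ 2 + C (2 * a) * X 0 * X 1 + C b * X 1 ^ 2)) ∧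
    ((projRoots f).ncard = 3 →
      ∃ (A : Matrix (Fin 2) (Fin 2) ℝ) (lam a b : ℝ), IsUnit A.det ∧ lam ≠ 0 ∧
        b - a ^ 2 < 0 ∧
        C lam * subst A f =
          X 0 * (X 0 ^ 2 + X 1 ^ 2) * (X 0 ^ 2 + C (2 * a) * X 0 * X 1 + C b * X 1 ^ 2)) ∧
    ((projRoots f).ncard = 5 →
      ∃ (A : Matrix (Fin 2) (Fin 2) ℝ) (lam a b : ℝ), IsUnit A.det ∧ lam ≠ 0 ∧
        b - a ^ 2 < 0 ∧
        C lam * subst A f =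
          X 0 * (X 0 ^ 2 - X 1 ^ 2) * (X 0 ^ 2 + C (2 * a) * X 0 * X 1 + C b * X 1 ^ 2)) := by
  have hf0 : f ≠ 0 := by
    rintro rfl
    unfold SquarefreeC at hsf
    simp at hsf
  obtain ⟨c, L, Q, hc, hlen, hL, hQ, hfe⟩ := factT_of_homog hf hf0
  obtain ⟨hb, hcard⟩ := fact_count hsf c L Q hc hL hQ hfe
  rw [hcard]
  refine ⟨fun h => ?_, fun h => ?_, fun h => ?_⟩
  · obtain ⟨l, rfl⟩ := List.length_eq_one_iff.1 h
    obtain ⟨q, r, rfl⟩ := List.length_eq_two.1 (show Q.length = 2 by omega)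
    exact case_one f c l q r hc (hQ _ (by simp)) (hQ _ (by simp)) (hL _ (by simp))
      (by rw [hfe]; simp only [List.map_cons, List.map_nil, List.prod_cons, List.prod_nil]; ring)
  · obtain ⟨l, m, n, rfl⟩ := List.length_eq_three.1 h
    obtain ⟨q, rfl⟩ := List.length_eq_one_iff.1 (show Q.length = 1 by omega)
    refine case_three f c l m n q hc (hQ _ (by simp)) (hL _ (by simp)) (hL _ (by simp))
      (hL _ (by simp)) ?_ ?_ ?_ (by rw [hfe]; simp only [List.map_cons, List.map_nil, List.prod_cons, List.prod_nil]; ring)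
    · exact hb ⟨0, by simp⟩ ⟨1, by simp⟩ (by simp)
    · exact hb ⟨0, by simp⟩ ⟨2, by simp⟩ (by simp)
    · exact hb ⟨1, by simp⟩ ⟨2, by simp⟩ (by simp)
  · obtain rfl : Q = [] := List.length_eq_zero_iff.1 (by omega)
    match L, h, hL, hb, hfe with
    | [l0, l1, l2, l3, l4], h, hL, hb, hfe =>
      exact case_five f c (fun i => [l0, l1, l2, l3, l4][i]) hc (hL _ (by simp)) hb
        (by
          rw [hfe]
          simp only [List.map_cons, List.map_nil, List.prod_cons, List.prod_nil]
          change _ = C c * linF l0 * linF l1 * linF l2 * linF l3 * linF l4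
          ring)
end
end

section
/- Let f be a real binary form of degree d ≥ 2 with d distinct real roots. Then for every (a,b) ≠ (0,0), the real binary form a·∂f/∂x + b·∂f/∂y of degree d−1 has d−1 distinct real roots. -/
open MvPolynomial

noncomputable section

theorem eval_smul_hom {φ : MvPolynomial (Fin 2) ℝ} {n : ℕ} (h : φ.IsHomogeneous n)
    (c : ℝ) (u : Fin 2 → ℝ) : eval (c • u) φ = c ^ n * eval u φ := by
  rw [eval_eq', eval_eq', Finset.mul_sum]
  refine Finset.sum_congr rfl fun m hm => ?_
  have h1 := h (mem_support_iff.1 hm)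
  have h2 : m 0 + m 1 = n := by
    rw [← h1, Finsupp.weight_apply, Finsupp.sum_fintype _ _ (by simp)]
    simp
  simp only [Fin.prod_univ_two, Pi.smul_apply, smul_eq_mul, mul_pow, ← h2, pow_add]
  ring

/-- affine + infinity parametrisation -/
def vec (a b : ℝ) : Option ℝ → (Fin 2 → ℝ)
  | none => ![a, b]
  | some s => ![s * a - b, s * b + a]

theorem sq_ne {a b : ℝ} (h : (a, b) ≠ (0, 0)) : a * a + b * b ≠ 0 := by
  intro h0
  apply h
  have ha : a = 0 := by nlinarith [mul_self_nonneg a, mul_self_nonneg b]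
  have hb : b = 0 := by nlinarith [mul_self_nonneg a, mul_self_nonneg b]
  rw [ha, hb]

theorem vec_ne {a b : ℝ} (h : (a, b) ≠ (0, 0)) (o : Option ℝ) : vec a b o ≠ 0 := by
  intro h0
  have e0 := congrFun h0 0
  have e1 := congrFun h0 1
  have := sq_ne h
  cases o with
  | none =>
    simp [vec] at e0 e1
    apply h; rw [e0, e1]
  | some s =>
    simp [vec] at e0 e1
    apply this
    linear_combination a * e1 - b * e0

def Phi {a b : ℝ} (h : (a, b) ≠ (0, 0)) (o : Option ℝ) : Projectivization ℝ (Fin 2 → ℝ) :=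
  Projectivization.mk ℝ (vec a b o) (vec_ne h o)

theorem Phi_inj {a b : ℝ} (h : (a, b) ≠ (0, 0)) : Function.Injective (Phi h) := by
  intro o o' e
  have hs := sq_ne h
  obtain ⟨c, hc⟩ := (Projectivization.mk_eq_mk_iff' ℝ _ _ _ _).1 e
  have e0 := congrFun hc 0
  have e1 := congrFun hc 1
  cases o with
  | none =>
    cases o' with
    | none => rfl
    | some t =>
      exfalso
      simp [vec] at e0 e1
      have : c * (a * a + b * b) = 0 := by linear_combination a * e1 - b * e0
      have hc0 : c = 0 := by simpa [hs] using this
      subst hc0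
      apply h; rw [← e0, ← e1]; simp
  | some s =>
    cases o' with
    | none =>
      exfalso
      simp [vec] at e0 e1
      apply hs; linear_combination b * e0 - a * e1
    | some t =>
      simp [vec] at e0 e1
      have h1 : (c - 1) * (a * a + b * b) = 0 := by linear_combination a * e1 - b * e0
      have hc0 : c = 1 := by
        have : c - 1 = 0 := by simpa [hs] using h1
        linarith
      subst hc0
      have h2 : (t - s) * (a * a + b * b) = 0 := by linear_combination a * e0 + b * e1
      have : t - s = 0 := by simpa [hs] using h2
      congr 1; linarith

theorem Phi_surj {a b : ℝ} (h : (a, b) ≠ (0, 0)) : Function.Surjective (Phi h) := by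
  intro p
  have hs := sq_ne h
  have hs2 : a ^ 2 + b ^ 2 ≠ 0 := by rw [pow_two, pow_two]; exact hs
  induction p using Projectivization.ind with
  | h u hu =>
    by_cases hb : a * u 1 - b * u 0 = 0
    · refine ⟨none, ?_⟩
      symm
      refine (Projectivization.mk_eq_mk_iff' ℝ _ _ _ _).2 ⟨(a * u 0 + b * u 1) / (a * a + b * b), ?_⟩
      ext i
      fin_cases i
      · simp [vec]; field_simp; linear_combination b * hb
      · simp [vec]; field_simp; linear_combination -a * hb
    · refine ⟨some ((a * u 0 + b * u 1) / (a * u 1 - b * u 0)), ?_⟩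
      symm
      refine (Projectivization.mk_eq_mk_iff' ℝ _ _ _ _).2 ⟨(a * u 1 - b * u 0) / (a * a + b * b), ?_⟩
      ext i
      fin_cases i
      · simp [vec]; field_simp; ring
      · simp [vec]; field_simp; ring

theorem mem_projRoots_s8 {g : MvPolynomial (Fin 2) ℝ} {n : ℕ} (hg : g.IsHomogeneous n)
    {a b : ℝ} (h : (a, b) ≠ (0, 0)) (o : Option ℝ) :
    Phi h o ∈ projRoots g ↔ eval (vec a b o) g = 0 := by
  obtain ⟨c, hc⟩ := Projectivization.exists_smul_eq_mk_rep ℝ (vec a b o) (vec_ne h o)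
  show eval (Phi h o).rep g = 0 ↔ _
  have : (Phi h o).rep = (c : ℝ) • vec a b o := hc.symm
  rw [this, eval_smul_hom hg]
  simp

theorem chain (a b : ℝ) (f : MvPolynomial (Fin 2) ℝ) :
    Polynomial.derivative (aeval (![Polynomial.C a * Polynomial.X - Polynomial.C b,
      Polynomial.C b * Polynomial.X + Polynomial.C a] : Fin 2 → Polynomial ℝ) f) =
    aeval (![Polynomial.C a * Polynomial.X - Polynomial.C b,
      Polynomial.C b * Polynomial.X + Polynomial.C a] : Fin 2 → Polynomial ℝ)
      (C a * pderiv 0 f + C b * pderiv 1 f) := by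
  induction f using MvPolynomial.induction_on with
  | C r => simp [Polynomial.algebraMap_eq]
  | add p q hp hq =>
    rw [map_add, map_add, hp, hq, ← map_add]
    congr 1
    simp only [map_add]; ring
  | mul_X p i hp =>
    rw [map_mul, Polynomial.derivative_mul, hp]
    simp only [pderiv_mul, map_add, map_mul]
    fin_cases i
    · simp [pderiv_X, Polynomial.algebraMap_eq]; ring
    · simp [pderiv_X, Polynomial.algebraMap_eq]; ring

theorem eval_aeval (a b s : ℝ) (g : MvPolynomial (Fin 2) ℝ) :
    Polynomial.eval s (aeval (![Polynomial.C a * Polynomial.X - Polynomial.C b,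
      Polynomial.C b * Polynomial.X + Polynomial.C a] : Fin 2 → Polynomial ℝ) g) =
    eval (vec a b (some s)) g := by
  induction g using MvPolynomial.induction_on with
  | C r => simp [Polynomial.algebraMap_eq]
  | add p q hp hq => simp [hp, hq]
  | mul_X p i hp =>
    rw [map_mul, Polynomial.eval_mul, hp, map_mul]
    congr 1
    fin_cases i <;> simp [vec] <;> ring

theorem stmt8 (d : ℕ) (hd : 2 ≤ d) (f : MvPolynomial (Fin 2) ℝ)
    (hsplit : SplitsDistinct f d) :
    ∀ a b : ℝ, (a, b) ≠ (0, 0) →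
      (projRoots (C a * pderiv 0 f + C b * pderiv 1 f)).ncard = d - 1 := by
  intro a b h
  obtain ⟨A, B, hne, hpw, rfl⟩ := hsplit
  set f := ∏ j, lin (A j) (B j) with hf
  have hs := sq_ne h
  have hfh : f.IsHomogeneous d := by
    have := IsHomogeneous.prod Finset.univ (fun j => lin (A j) (B j)) (fun _ => 1)
      (fun j _ => by
        unfold lin
        exact (isHomogeneous_C_mul_X _ _).add (isHomogeneous_C_mul_X _ _))
    simpa using this
  set g := C a * pderiv 0 f + C b * pderiv 1 f with hg
  have hgh : g.IsHomogeneous (d - 1) := by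
    have h0 := (isHomogeneous_C (Fin 2) a).mul (hfh.pderiv (i := 0))
    have h1 := (isHomogeneous_C (Fin 2) b).mul (hfh.pderiv (i := 1))
    rw [zero_add] at h0 h1
    exact h0.add h1
  -- value at infinity
  have hinf : eval (vec a b none) g = d * ∏ j, (A j * a + B j * b) := by
    have := congrArg (eval (vec a b none)) hfh.sum_X_mul_pderiv
    simp [Fin.sum_univ_two, vec] at this
    simp only [hg, map_add, map_mul, eval_C]
    simp only [vec]
    rw [this, hf]
    simp [lin, map_prod]
  set q : Polynomial ℝ := aeval (![Polynomial.C a * Polynomial.X - Polynomial.C b,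
      Polynomial.C b * Polynomial.X + Polynomial.C a] : Fin 2 → Polynomial ℝ) f with hq
  have hqd : ∀ s, Polynomial.eval s (Polynomial.derivative q) = eval (vec a b (some s)) g := by
    intro s; rw [hq, chain, eval_aeval]
  have hqprod : q = ∏ j, (Polynomial.C (A j * a + B j * b) * Polynomial.X
      + Polynomial.C (B j * a - A j * b)) := by
    rw [hq, hf, map_prod]
    refine Finset.prod_congr rfl fun j _ => ?_
    simp [lin, Polynomial.algebraMap_eq]; ring
  let T : Finset (Fin d) := Finset.univ.filter fun j => A j * a + B j * b ≠ 0
  have hfac : ∀ j, A j * a + B j * b = 0 → B j * a - A j * b ≠ 0 := by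
    intro j h1 h2
    have e1 : A j * (a * a + b * b) = 0 := by linear_combination a * h1 - b * h2
    have e2 : B j * (a * a + b * b) = 0 := by linear_combination b * h1 + a * h2
    apply hne j
    have e1' : A j = 0 := by simpa [hs] using e1
    have e2' : B j = 0 := by simpa [hs] using e2
    rw [e1', e2']
  have hq0 : q ≠ 0 := by
    rw [hqprod, Finset.prod_ne_zero_iff]
    intro j _ h0
    have c1 := congrArg (fun p => Polynomial.coeff p 1) h0
    have c0 := congrArg (fun p => Polynomial.coeff p 0) h0
    simp at c1 c0
    exact hfac j c1 c0
  have hdeg : q.natDegree ≤ T.card := by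
    rw [hqprod]
    refine (Polynomial.natDegree_prod_le _ _).trans ?_
    rw [Finset.card_filter]
    refine Finset.sum_le_sum fun j _ => ?_
    split_ifs with hj
    · exact Polynomial.natDegree_linear_le
    · push Not at hj
      rw [hj, Polynomial.C_0, zero_mul, zero_add, Polynomial.natDegree_C]
  have hroots : T.card ≤ q.roots.toFinset.card := by
    refine Finset.card_le_card_of_injOn (fun j => -(B j * a - A j * b) / (A j * a + B j * b)) ?_ ?_
    · intro j hj
      have hj' : A j * a + B j * b ≠ 0 := by simpa [T] using hj
      simp only [Finset.mem_coe, Multiset.mem_toFinset, Polynomial.mem_roots hq0, Polynomial.IsRoot]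
      rw [hqprod, Polynomial.eval_prod]
      refine Finset.prod_eq_zero (Finset.mem_univ j) ?_
      simp
      field_simp
      ring
    · intro i hi j hj hij
      have hi' : A i * a + B i * b ≠ 0 := by simpa [T] using hi
      have hj' : A j * a + B j * b ≠ 0 := by simpa [T] using hj
      by_contra hne'
      apply hpw i j hne'
      simp only at hij
      rw [div_eq_div_iff hi' hj'] at hij
      have : (A i * B j - A j * B i) * (a * a + b * b) = 0 := by linear_combination hij
      have : A i * B j - A j * B i = 0 := by simpa [hs] using this
      linarith
  have hcompl : (Finset.univ.filter fun j => ¬ (A j * a + B j * b ≠ 0)).card ≤ 1 := by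
    rw [Finset.card_le_one]
    intro i hi j hj
    simp at hi hj
    by_contra hne'
    apply hpw i j hne'
    have e1 : a * (A i * B j - A j * B i) = 0 := by linear_combination B j * hi - B i * hj
    have e2 : b * (A i * B j - A j * B i) = 0 := by linear_combination A i * hj - A j * hi
    have : (A i * B j - A j * B i) * (a * a + b * b) = 0 := by linear_combination a * e1 + b * e2
    have : A i * B j - A j * B i = 0 := by simpa [hs] using this
    linarith
  have hsum : T.card + (Finset.univ.filter fun j => ¬ (A j * a + B j * b ≠ 0)).card = d := by
    simpa using Finset.card_filter_add_card_filter_not (s := (Finset.univ : Finset (Fin d)))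
      (fun j => A j * a + B j * b ≠ 0)
  have hrd := Polynomial.card_roots_toFinset_le_derivative q
  have hnd := Polynomial.natDegree_derivative_le q
  have hcd : (Polynomial.derivative q).roots.toFinset.card ≤ (Polynomial.derivative q).natDegree :=
    (Multiset.toFinset_card_le _).trans (Polynomial.card_roots' _)
  have hq1 : q.natDegree ≠ 0 := by
    have := (Multiset.toFinset_card_le q.roots).trans (Polynomial.card_roots' _)
    omega
  have hdq0 : Polynomial.derivative q ≠ 0 := fun h0 =>
    hq1 (Polynomial.natDegree_eq_zero_of_derivative_eq_zero h0)
  have hcard : (Polynomial.derivative q).roots.toFinset.card = T.card - 1 := by omega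
  have himg : projRoots g = Phi h '' {o | eval (vec a b o) g = 0} := by
    ext p
    obtain ⟨o, rfl⟩ := Phi_surj h p
    rw [mem_projRoots_s8 hgh, (Phi_inj h).mem_set_image]
    rfl
  rw [himg, Set.ncard_image_of_injective _ (Phi_inj h)]
  have hroot' : ∀ s, s ∈ (Polynomial.derivative q).roots.toFinset ↔
      eval (vec a b (some s)) g = 0 := by
    intro s
    rw [Multiset.mem_toFinset, Polynomial.mem_roots hdq0, Polynomial.IsRoot, hqd]
  have hd0 : (d : ℝ) ≠ 0 := by
    have : d ≠ 0 := by omega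
    exact_mod_cast this
  by_cases hz : ∏ j, (A j * a + B j * b) = 0
  · have hset : {o | eval (vec a b o) g = 0} =
        ((Finset.insertNone (Polynomial.derivative q).roots.toFinset : Finset (Option ℝ)) :
          Set (Option ℝ)) := by
      ext o
      cases o with
      | none => simp [hinf, hz]
      | some s => 
        rw [Finset.mem_coe, Finset.some_mem_insertNone, hroot']; rfl
    rw [hset, Set.ncard_coe_finset, Finset.card_insertNone, hcard]
    obtain ⟨j, _, hj⟩ := Finset.prod_eq_zero_iff.1 hz
    have : 0 < (Finset.univ.filter fun j => ¬ (A j * a + B j * b ≠ 0)).card :=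
      Finset.card_pos.2 ⟨j, by simpa using hj⟩
    omega
  · have hset : {o | eval (vec a b o) g = 0} =
        (((Polynomial.derivative q).roots.toFinset.map Function.Embedding.some :
          Finset (Option ℝ)) : Set (Option ℝ)) := by
      ext o
      cases o with
      | none =>
        simp only [Set.mem_setOf_eq, hinf]
        simp [hd0, hz]
      | some s =>
        rw [Finset.mem_coe, Set.mem_setOf_eq, ← hroot']
        simp
    rw [hset, Set.ncard_coe_finset, Finset.card_map, hcard]
    have : (Finset.univ.filter fun j => ¬ (A j * a + B j * b ≠ 0)).card = 0 := by
      rw [Finset.card_eq_zero, Finset.filter_eq_empty_iff]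
      intro j _ hj
      exact hj (Finset.prod_ne_zero_iff.1 hz j (Finset.mem_univ j))
    omega
end
end
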